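/- (Nekhoroshev theorem for quasi-integrable symplectic maps) There exist positive constants ε₀, c₁, c₂, c₃ such that for every 0 < ε ≤ ε₀ and every initial condition (I₀,φ₀) ∈ B_R × ℝ^d, the trajectory (I_k,φ_k) = F_ε^k(I₀,φ₀) satisfies |I_k − I₀| < c₁ ε^{1/(2(d+1))} for every integer k with 0 ≤ k ≤ c₂·exp(c₃ ε^{−1/(2(d+1))}). -/

import Mathlib

/-- Real phase space `ℝ^d × ℝ^d` (actions–angles, sup norm), a lift of `ℝ^d × 𝕋^d`. -/
abbrev RPhase (d : ℕ) := (Fin d → ℝ) × (Fin d → ℝ)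

/-- Complex phase space `ℂ^d × ℂ^d` with the sup norm. -/
abbrev CPhase (d : ℕ) := (Fin d → ℂ) × (Fin d → ℂ)

/-- Complexification of a real vector. -/
def cx (d : ℕ) (v : Fin d → ℝ) : Fin d → ℂ := fun i => (v i : ℂ)

set_option linter.unusedSectionVars false
set_option linter.style.longLine false

namespace Nek
open Metric

section Cauchy
variable {X Y : Type*} [NormedAddCommGroup X] [NormedSpace ℂ X]
  [NormedAddCommGroup Y] [NormedSpace ℂ Y]

/-- Cauchy estimate for the Fréchet derivative. -/
theorem cauchy_fderiv {g : X → Y} {x : X} {δ M : ℝ} (hδ : 0 < δ)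
    (hg : DifferentiableOn ℂ g (ball x δ)) (hM : ∀ y ∈ ball x δ, ‖g y‖ ≤ M) :
    ‖fderiv ℂ g x‖ ≤ M / δ := by
  have hM0 : 0 ≤ M := (norm_nonneg _).trans (hM x (mem_ball_self hδ))
  have hgx : DifferentiableAt ℂ g x := hg.differentiableAt (ball_mem_nhds x hδ)
  refine ContinuousLinearMap.opNorm_le_bound _ (by positivity) fun v => ?_
  rcases eq_or_ne v 0 with rfl | hv
  · simp
  have hv' : 0 < ‖v‖ := norm_pos_iff.2 hv
  have key : ∀ ρ : ℝ, 0 < ρ → ρ < δ / ‖v‖ → ‖fderiv ℂ g x v‖ ≤ M / ρ := by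
    intro ρ hρ hρ'
    have hmem : ∀ t : ℂ, ‖t‖ ≤ ρ → x + t • v ∈ ball x δ := by
      intro t ht
      rw [mem_ball, dist_eq_norm, add_sub_cancel_left, norm_smul]
      calc ‖t‖ * ‖v‖ ≤ ρ * ‖v‖ := by gcongr
        _ < δ := by rwa [lt_div_iff₀ hv'] at hρ'
    have hline : ∀ t : ℂ, HasDerivAt (fun t : ℂ => x + t • v) v t := by
      intro t
      simpa using ((hasDerivAt_id t).smul_const v).const_add x
    have hd : deriv (fun t : ℂ => g (x + t • v)) 0 = fderiv ℂ g x v := by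
      have : HasFDerivAt g (fderiv ℂ g x) (x + (0:ℂ) • v) := by simpa using hgx.hasFDerivAt
      exact (this.comp_hasDerivAt (0:ℂ) (hline 0)).deriv
    rw [← hd]
    refine Complex.norm_deriv_le_of_forall_mem_sphere_norm_le hρ ?_ ?_
    · refine DifferentiableOn.diffContOnCl ?_
      intro t ht
      rw [closure_ball _ hρ.ne', mem_closedBall_zero_iff] at ht
      have h1 : DifferentiableAt ℂ g (x + t • v) :=
        hg.differentiableAt (isOpen_ball.mem_nhds (hmem t ht))
      exact (h1.comp t (hline t).differentiableAt).differentiableWithinAt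
    · intro t ht
      exact hM _ (hmem t (by simpa using ht.le))
  by_contra! hcon
  have hpos : 0 < ‖fderiv ℂ g x v‖ := lt_of_le_of_lt (by positivity) hcon
  -- take ρ slightly below
  have hMδ : M < δ / ‖v‖ * ‖fderiv ℂ g x v‖ := by
    rw [div_mul_eq_mul_div, lt_div_iff₀ hv']
    rw [div_mul_eq_mul_div, div_lt_iff₀ hδ] at hcon
    linarith
  have h2 : M / ‖fderiv ℂ g x v‖ < δ / ‖v‖ := by rwa [div_lt_iff₀ hpos]
  obtain ⟨ρ, h3, h4⟩ := exists_between h2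
  have hρ : 0 < ρ := lt_of_le_of_lt (by positivity) h3
  have := key ρ hρ h4
  rw [le_div_iff₀ hρ] at this
  rw [div_lt_iff₀ hpos] at h3
  linarith

theorem cauchy_fderiv_ball {g : X → Y} {x₀ x : X} {R a M : ℝ} (ha : 0 < a)
    (hg : DifferentiableOn ℂ g (ball x₀ R)) (hM : ∀ y ∈ ball x₀ R, ‖g y‖ ≤ M)
    (hx : x ∈ ball x₀ (R - a)) : ‖fderiv ℂ g x‖ ≤ M / a := by
  have hsub : ball x a ⊆ ball x₀ R := by
    apply ball_subset_ball'
    rw [mem_ball] at hx; linarith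
  exact cauchy_fderiv ha (hg.mono hsub) fun y hy => hM y (hsub hy)

theorem lip_ball {g : X → Y} {x₀ x y : X} {R a M : ℝ} (ha : 0 < a)
    (hg : DifferentiableOn ℂ g (ball x₀ R)) (hM : ∀ y ∈ ball x₀ R, ‖g y‖ ≤ M)
    (hx : x ∈ ball x₀ (R - a)) (hy : y ∈ ball x₀ (R - a)) :
    ‖g y - g x‖ ≤ M / a * ‖y - x‖ := by
  refine (convex_ball x₀ (R - a)).norm_image_sub_le_of_norm_fderiv_le (𝕜 := ℂ) ?_ ?_ hx hy
  · intro z hz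
    exact hg.differentiableAt (isOpen_ball.mem_nhds (ball_subset_ball (by linarith) hz))
  · intro z hz
    exact cauchy_fderiv_ball ha hg hM hz

/-- Finite difference operator along a map. -/
def dD (f : X → X) (g : X → Y) : X → Y := fun x => g (f x) - g x

theorem dD_bound {f : X → X} {g : X → Y} {x₀ : X} {δ R a μ M : ℝ}
    (hf : DifferentiableOn ℂ f (ball x₀ δ)) (hμ : ∀ x ∈ ball x₀ δ, ‖f x - x‖ ≤ μ)
    (hR : R ≤ δ) (ha : 0 < a) (h2 : 2 * μ ≤ a)
    (hg : DifferentiableOn ℂ g (ball x₀ R)) (hM : ∀ y ∈ ball x₀ R, ‖g y‖ ≤ M) :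
    DifferentiableOn ℂ (dD f g) (ball x₀ (R - a)) ∧
      ∀ y ∈ ball x₀ (R - a), ‖dD f g y‖ ≤ 2 * μ / a * M := by
  have hmap : ∀ y ∈ ball x₀ (R - a), f y ∈ ball x₀ (R - a / 2) := by
    intro y hy
    have h1 := hμ y (ball_subset_ball (by linarith) hy)
    rw [mem_ball] at hy ⊢
    have := dist_triangle (f y) y x₀
    rw [dist_eq_norm (f y) y] at this
    linarith
  constructor
  · refine DifferentiableOn.sub ?_ (hg.mono (ball_subset_ball (by linarith)))
    refine hg.comp (hf.mono (ball_subset_ball (by linarith))) ?_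
    intro y hy
    exact ball_subset_ball (by linarith) (hmap y hy)
  · intro y hy
    have hy' : y ∈ ball x₀ (R - a / 2) := ball_subset_ball (by linarith) hy
    have hyR : y ∈ ball x₀ R := ball_subset_ball (by linarith) hy
    have h1 := hμ y (ball_subset_ball (by linarith) hy)
    have hM0 : 0 ≤ M := (norm_nonneg _).trans (hM y hyR)
    calc ‖dD f g y‖ ≤ M / (a / 2) * ‖f y - y‖ :=
          lip_ball (by linarith) hg hM hy' (hmap y hy)
      _ ≤ M / (a / 2) * μ := by gcongr
      _ = 2 * μ / a * M := by field_simp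

theorem dD_iter_bound {f : X → X} {g : X → Y} {x₀ : X} {δ a μ M : ℝ} 
    (hf : DifferentiableOn ℂ f (ball x₀ δ)) (hμ : ∀ x ∈ ball x₀ δ, ‖f x - x‖ ≤ μ)
    (ha : 0 < a) (h2 : 2 * μ ≤ a)
    (hg : DifferentiableOn ℂ g (ball x₀ δ)) (hM : ∀ y ∈ ball x₀ δ, ‖g y‖ ≤ M) (j : ℕ) :
    DifferentiableOn ℂ ((dD f)^[j] g) (ball x₀ (δ - j * a)) ∧
      ∀ y ∈ ball x₀ (δ - j * a), ‖(dD f)^[j] g y‖ ≤ (2 * μ / a) ^ j * M := by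
  induction j with
  | zero => simpa using ⟨hg, hM⟩
  | succ j ih =>
    have h := dD_bound hf hμ (R := δ - j * a) (by nlinarith [Nat.cast_nonneg (α := ℝ) j]) ha h2
      ih.1 ih.2
    rw [Function.iterate_succ_apply']
    have e : δ - (↑(j + 1) : ℝ) * a = δ - j * a - a := by push_cast; ring
    rw [e]
    refine ⟨h.1, fun y hy => (h.2 y hy).trans (le_of_eq ?_)⟩
    ring

/-- Bound of the `j`-th difference at the center. -/
theorem dD_center {f : X → X} {g : X → Y} {x₀ : X} {δ μ M : ℝ} (hδ : 0 < δ)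
    (hf : DifferentiableOn ℂ f (ball x₀ δ)) (hμ : ∀ x ∈ ball x₀ δ, ‖f x - x‖ ≤ μ)
    (hg : DifferentiableOn ℂ g (ball x₀ δ)) (hM : ∀ y ∈ ball x₀ δ, ‖g y‖ ≤ M) (j : ℕ)
    (hj : 4 * j * μ ≤ δ) :
    ‖(dD f)^[j] g x₀‖ ≤ (4 * j * μ / δ) ^ j * M := by
  rcases Nat.eq_zero_or_pos j with rfl | hj0
  · simpa using hM x₀ (mem_ball_self hδ)
  have hjr : (0:ℝ) < j := by exact_mod_cast hj0
  have h := (dD_iter_bound hf hμ (a := δ / (2 * j)) (by positivity)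
    (by rw [le_div_iff₀ (by positivity)]; linarith) hg hM j).2 x₀ 
    (by apply mem_ball_self; field_simp; linarith)
  refine h.trans (le_of_eq ?_)
  congr 2
  field_simp; ring

theorem dD_iter_comp {f : X → X} {g : X → Y} (j k : ℕ) (x : X) :
    (fwdDiff 1)^[j] (fun k => g (f^[k] x)) k = (dD f)^[j] g (f^[k] x) := by
  induction j generalizing k with
  | zero => simp
  | succ j ih =>
    rw [Function.iterate_succ_apply', Function.iterate_succ_apply', fwdDiff, ih, ih]
    simp only [dD]
    rw [Function.iterate_succ_apply' f]

theorem dD_iter_compf {f : X → X} {g : X → Y} (j : ℕ) :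
    (dD f)^[j] (fun x => g (f x)) = fun x => (dD f)^[j] g (f x) := by
  induction j with
  | zero => rfl
  | succ j ih =>
    rw [Function.iterate_succ_apply', Function.iterate_succ_apply', ih]
    rfl

theorem dD_iter_clm {Z : Type*} [NormedAddCommGroup Z] [NormedSpace ℂ Z]
    {f : X → X} {g : X → Y} (l : Y →L[ℂ] Z) (j : ℕ) :
    (dD f)^[j] (fun x => l (g x)) = fun x => l ((dD f)^[j] g x) := by
  induction j with
  | zero => rfl
  | succ j ih =>
    rw [Function.iterate_succ_apply', Function.iterate_succ_apply', ih]
    funext x; simp [dD]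

theorem dD_iter_subconst {f : X → X} {g : X → Y} (c : Y) (j : ℕ) :
    (dD f)^[j + 1] (fun x => g x - c) = (dD f)^[j + 1] g := by
  rw [Function.iterate_succ_apply, Function.iterate_succ_apply]
  congr 1
  funext x; simp [dD]

/-- Newton formula. -/
theorem newton {f : X → X} {g : X → Y} (x : X) {k m : ℕ} (hk : k ≤ m) :
    g (f^[k] x) = ∑ j ∈ Finset.range (m + 1), k.choose j • (dD f)^[j] g x := by
  have h := shift_eq_sum_fwdDiff_iter (h := 1) (fun k => g (f^[k] x)) k 0
  simp only [smul_eq_mul, mul_one, zero_add] at h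
  rw [h]
  have h2 : ∀ j, (fwdDiff 1)^[j] (fun k => g (f^[k] x)) 0 = (dD f)^[j] g x := fun j => by
    rw [dD_iter_comp]; rfl
  simp only [h2]
  apply Finset.sum_subset
  · intro i; simp; omega
  · intro i _ hi
    rw [Nat.choose_eq_zero_of_lt (by simp at hi; omega)]; simp

end Cauchy

/-- binomial polynomial -/
noncomputable def cb (t : ℂ) (j : ℕ) : ℂ := (∏ i ∈ Finset.range j, (t - i)) / j.factorial

theorem cb_nat (k j : ℕ) : cb k j = k.choose j := by
  unfold cb
  rw [div_eq_iff (by exact_mod_cast j.factorial_ne_zero), ← descPochhammer_eval_eq_prod_range,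
    descPochhammer_eval_eq_descFactorial, Nat.descFactorial_eq_factorial_mul_choose]
  push_cast; ring

theorem cb_bound {t : ℂ} {m j : ℕ} (ht : ‖t‖ ≤ 3 * m) (hj : j ≤ m) :
    ‖cb t j‖ ≤ (4 * m : ℝ) ^ j / j.factorial := by
  unfold cb
  rw [norm_div, norm_prod]
  have : ‖((j.factorial : ℕ) : ℂ)‖ = j.factorial := by simp
  rw [this]
  gcongr
  calc ∏ i ∈ Finset.range j, ‖t - i‖ ≤ ∏ i ∈ Finset.range j, (4 * m : ℝ) := by
        apply Finset.prod_le_prod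
        · intros; positivity
        · intro i hi
          have hi' : (i : ℝ) ≤ m := by
            have := Finset.mem_range.1 hi
            exact_mod_cast (by omega : i ≤ m)
          calc ‖t - i‖ ≤ ‖t‖ + ‖(i : ℂ)‖ := norm_sub_le _ _
            _ ≤ 3 * m + m := by rw [Complex.norm_natCast]; gcongr
            _ = 4 * m := by ring
    _ = _ := by simp

/-- derivative of the binomial polynomial at 0 -/
noncomputable def cc (j : ℕ) : ℂ := (-1) ^ j / (j + 1)

theorem cc_norm (j : ℕ) : ‖cc j‖ ≤ 1 := by
  unfold cc
  rw [norm_div]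
  have : ‖(j : ℂ) + 1‖ = j + 1 := by
    have := Complex.norm_natCast (j + 1); push_cast at this; exact this
  rw [this]
  simp only [norm_pow, norm_neg, norm_one, one_pow]
  rw [div_le_one (by positivity)]; linarith [Nat.cast_nonneg (α := ℝ) j]

theorem cb_deriv (j : ℕ) : HasDerivAt (fun t => cb t (j + 1)) (cc j) 0 := by
  have h : (fun t => cb t (j + 1)) =
      fun t : ℂ => t * ((∏ i ∈ Finset.range j, (t - (i + 1 : ℕ))) / (j + 1).factorial) := by
    funext t
    unfold cb
    rw [Finset.prod_range_succ']
    simp; ring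
  rw [h]
  have hd : DifferentiableAt ℂ
      (fun t : ℂ => (∏ i ∈ Finset.range j, (t - (i + 1 : ℕ))) / (j + 1).factorial) 0 := by
    fun_prop
  have := (hasDerivAt_id (0:ℂ)).mul hd.hasDerivAt
  refine this.congr_deriv ?_
  simp only [id, one_mul, zero_mul, add_zero, zero_sub]
  unfold cc
  rw [Finset.prod_neg, Finset.card_range]
  have : (∏ i ∈ Finset.range j, ((i + 1 : ℕ) : ℂ)) = j.factorial := by
    rw [← Finset.prod_range_add_one_eq_factorial]; push_cast; rfl
  rw [this, Nat.factorial_succ]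
  have : (j.factorial : ℂ) ≠ 0 := by exact_mod_cast j.factorial_ne_zero
  have : (j + 1 : ℂ) ≠ 0 := by exact_mod_cast j.succ_ne_zero
  push_cast
  field_simp

/-- A function vanishing at `1..n` is small at `0`. -/
theorem zeros_bound {ρ ρ' : ℝ} {m : ℕ} (hρ : (m : ℝ) < ρ) (hρ' : ρ < ρ') (n : ℕ) (hn : n ≤ m) :
    ∀ (q : ℂ → ℂ) (M : ℝ), DifferentiableOn ℂ q (ball 0 ρ') → (∀ t ∈ sphere (0:ℂ) ρ, ‖q t‖ ≤ M) →
      (∀ k : ℕ, 1 ≤ k → k ≤ n → q k = 0) → ‖q 0‖ ≤ M * (n.factorial / (ρ - m) ^ n) := by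
  have hρ0 : 0 < ρ := lt_of_le_of_lt (Nat.cast_nonneg m) hρ
  induction n with
  | zero =>
    intro q M hq hM _
    have : ‖q 0‖ ≤ M := by
      refine Complex.norm_le_of_forall_mem_frontier_norm_le (U := ball 0 ρ) isBounded_ball ?_ ?_
        (subset_closure (mem_ball_self hρ0))
      · apply DifferentiableOn.diffContOnCl
        rw [closure_ball _ hρ0.ne']
        exact hq.mono (closedBall_subset_ball hρ')
      · rw [frontier_ball _ hρ0.ne']; exact hM
    simpa using this
  | succ n ih =>
    intro q M hq hM hz
    have hnρ : ((n + 1 : ℕ) : ℝ) ≤ m := by exact_mod_cast hn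
    have hc : ((n + 1 : ℕ) : ℂ) ∈ ball (0:ℂ) ρ' := by
      rw [mem_ball_zero_iff, Complex.norm_natCast]; linarith
    have hq' : DifferentiableOn ℂ (dslope q ((n + 1 : ℕ) : ℂ)) (ball 0 ρ') :=
      (Complex.differentiableOn_dslope (isOpen_ball.mem_nhds hc)).2 hq
    have hqc : q ((n + 1 : ℕ) : ℂ) = 0 := hz _ (by omega) le_rfl
    have h1 := ih (by omega) (dslope q ((n + 1 : ℕ) : ℂ)) (M / (ρ - m)) hq' ?_ ?_
    · have h0 : q 0 = (0 - ((n + 1 : ℕ) : ℂ)) * dslope q ((n + 1 : ℕ) : ℂ) 0 := by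
        have := sub_smul_dslope q ((n + 1 : ℕ) : ℂ) 0
        rw [hqc, sub_zero, smul_eq_mul] at this
        exact this.symm
      rw [h0, zero_sub, norm_mul, norm_neg, Complex.norm_natCast]
      calc ((n + 1 : ℕ) : ℝ) * ‖dslope q ((n + 1 : ℕ) : ℂ) 0‖
          ≤ ((n + 1 : ℕ) : ℝ) * (M / (ρ - m) * (n.factorial / (ρ - m) ^ n)) := by gcongr
        _ = _ := by
          have : ρ - m ≠ 0 := by linarith
          rw [Nat.factorial_succ]; push_cast; field_simp; ring
    · intro t ht
      have hne : t ≠ ((n + 1 : ℕ) : ℂ) := by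
        rintro rfl
        rw [mem_sphere_zero_iff_norm, Complex.norm_natCast] at ht; linarith
      have e := sub_smul_dslope q ((n + 1 : ℕ) : ℂ) t
      rw [hqc, sub_zero, smul_eq_mul] at e
      have hlow : ρ - m ≤ ‖t - ((n + 1 : ℕ) : ℂ)‖ := by
        have := norm_sub_norm_le t ((n + 1 : ℕ) : ℂ)
        rw [mem_sphere_zero_iff_norm] at ht
        rw [ht, Complex.norm_natCast] at this; linarith
      have h2 := hM t ht
      rw [← e, norm_mul] at h2
      rw [le_div_iff₀ (by linarith), mul_comm]
      refine le_trans ?_ h2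
      gcongr
    · intro k hk1 hk2
      have e := sub_smul_dslope q ((n + 1 : ℕ) : ℂ) (k : ℂ)
      rw [hqc, sub_zero, smul_eq_mul, hz k hk1 (by omega)] at e
      refine (mul_eq_zero.1 e).resolve_left ?_
      apply sub_ne_zero.2
      exact_mod_cast (by omega : k ≠ n + 1)

end Nek

namespace Nek
open Metric

theorem pow_self_le (j : ℕ) : (j : ℝ) ^ j ≤ 3 ^ j * j.factorial := by
  have h := Real.pow_div_factorial_le_exp (x := (j : ℝ)) (by positivity) j
  rw [div_le_iff₀ (by positivity)] at h
  refine h.trans ?_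
  gcongr
  rw [← Real.exp_one_pow]
  gcongr
  linarith [Real.exp_one_lt_d9]

theorem term_bound {t : ℂ} {m j : ℕ} {μ δ : ℝ} (hδ : 0 < δ) (hμ : 0 ≤ μ) (hm : 200 * m * μ ≤ δ)
    (ht : ‖t‖ ≤ 3 * m) (hj : j ≤ m) : ‖cb t j‖ * (4 * j * μ / δ) ^ j ≤ (1 / 4) ^ j := by
  have h1 := cb_bound ht hj
  calc ‖cb t j‖ * (4 * j * μ / δ) ^ j
      ≤ (4 * m : ℝ) ^ j / j.factorial * (4 * j * μ / δ) ^ j := by gcongr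
    _ = (16 * m * μ / δ) ^ j * (j ^ j / j.factorial) := by
        simp only [div_pow, mul_pow]
        rw [show (16:ℝ) ^ j = 4 ^ j * 4 ^ j by rw [← mul_pow]; norm_num]
        ring
    _ ≤ (16 * m * μ / δ) ^ j * 3 ^ j := by
        gcongr
        rw [div_le_iff₀ (by positivity)]
        exact pow_self_le j
    _ = (48 * m * μ / δ) ^ j := by
        rw [← mul_pow]; congr 1; ring
    _ ≤ (1 / 4) ^ j := by
        refine pow_le_pow_left₀ (by positivity) ?_ j
        rw [div_le_iff₀ hδ]
        nlinarith [mul_nonneg (Nat.cast_nonneg (α := ℝ) m) hμ]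

theorem geom4 (n : ℕ) : ∑ j ∈ Finset.range n, (1 / 4 : ℝ) ^ (j + 1) ≤ 1 / 3 := by
  have : ∑ j ∈ Finset.range n, (1 / 4 : ℝ) ^ (j + 1) = 1 / 3 * (1 - (1 / 4) ^ n) := by
    induction n with
    | zero => simp
    | succ n ih => rw [Finset.sum_range_succ, ih]; ring
  rw [this]
  have : (0:ℝ) ≤ (1 / 4) ^ n := by positivity
  linarith

variable {X : Type*} [NormedAddCommGroup X] [NormedSpace ℂ X]

theorem dD_id_bound {f : X → X} {x₀ : X} {δ μ : ℝ} (hδ : 0 < δ)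
    (hf : DifferentiableOn ℂ f (ball x₀ δ)) (hμ : ∀ x ∈ ball x₀ δ, ‖f x - x‖ ≤ μ)
    (j : ℕ) (hj : 4 * (j + 1 : ℕ) * μ ≤ δ) :
    ‖(dD f)^[j + 1] (fun x => x) x₀‖ ≤ (4 * (j + 1 : ℕ) * μ / δ) ^ (j + 1) * δ := by
  have h := dD_center (g := fun x : X => x - x₀) (M := δ) hδ hf hμ (by fun_prop)
    (fun y hy => by rw [← dist_eq_norm]; exact (mem_ball.1 hy).le) (j + 1) hj
  rwa [dD_iter_subconst (g := fun x : X => x)] at h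

/-- The truncated logarithm of `1 + Δ` is a derivation up to an exponentially small error. -/
theorem propA {f : X → X} {g : X → ℂ} {x₀ : X} {δ μ M : ℝ} {m : ℕ} (hδ : 0 < δ)
    (hf : DifferentiableOn ℂ f (ball x₀ δ)) (hμ : ∀ x ∈ ball x₀ δ, ‖f x - x‖ ≤ μ)
    (hg : DifferentiableOn ℂ g (ball x₀ δ)) (hM : ∀ y ∈ ball x₀ δ, ‖g y‖ ≤ M)
    (hm1 : 1 ≤ m) (hm : 200 * m * μ ≤ δ) :
    ‖∑ j ∈ Finset.range m, cc j * (dD f)^[j + 1] g x₀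
      - fderiv ℂ g x₀ (∑ j ∈ Finset.range m, cc j • (dD f)^[j + 1] (fun x => x) x₀)‖
      ≤ 2 * M * (2 / 3) ^ m := by
  have hμ0 : 0 ≤ μ := (norm_nonneg _).trans (hμ x₀ (mem_ball_self hδ))
  have hM0 : 0 ≤ M := (norm_nonneg _).trans (hM x₀ (mem_ball_self hδ))
  have hm0 : (1:ℝ) ≤ m := by exact_mod_cast hm1
  have hjm : ∀ j : ℕ, j ≤ m → 4 * (j:ℝ) * μ ≤ δ := by
    intro j hj
    have : (j:ℝ) ≤ m := by exact_mod_cast hj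
    nlinarith [mul_le_mul_of_nonneg_right this hμ0, mul_nonneg (zero_le_one.trans hm0) hμ0]
  set a : ℕ → X := fun j => (dD f)^[j] (fun x => x) x₀ with ha
  set b : ℕ → ℂ := fun j => (dD f)^[j] g x₀ with hb
  have hb_bd : ∀ j ≤ m, ‖b j‖ ≤ (4 * j * μ / δ) ^ j * M := fun j hj =>
    dD_center hδ hf hμ hg hM j (hjm j hj)
  have ha_bd : ∀ j, j + 1 ≤ m → ‖a (j + 1)‖ ≤ (4 * (j + 1 : ℕ) * μ / δ) ^ (j + 1) * δ :=
    fun j hj => dD_id_bound hδ hf hμ j (hjm _ hj)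
  set P : ℂ → X := fun t => ∑ j ∈ Finset.range (m + 1), cb t j • a j with hP
  set Q : ℂ → ℂ := fun t => ∑ j ∈ Finset.range (m + 1), cb t j * b j with hQ
  have ha0 : a 0 = x₀ := rfl
  have hcb0 : ∀ t, cb t 0 = 1 := fun t => by simp [cb]
  have hcbd : ∀ j, Differentiable ℂ (fun t => cb t j) := fun j => by unfold cb; fun_prop
  have hPd : Differentiable ℂ P := by
    apply Differentiable.fun_sum
    intro j _
    exact (hcbd j).smul_const _
  have hQd : Differentiable ℂ Q := by
    apply Differentiable.fun_sum
    intro j _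
    exact (hcbd j).mul_const _
  have hPball : ∀ t : ℂ, ‖t‖ ≤ 3 * m → P t ∈ ball x₀ δ := by
    intro t ht
    rw [mem_ball, dist_eq_norm, hP]
    simp only
    rw [Finset.sum_range_succ', hcb0, one_smul, ha0, add_sub_cancel_right]
    calc ‖∑ j ∈ Finset.range m, cb t (j + 1) • a (j + 1)‖
        ≤ ∑ j ∈ Finset.range m, (1 / 4) ^ (j + 1) * δ := by
          refine norm_sum_le_of_le _ fun j hj => ?_
          have hj' : j + 1 ≤ m := Finset.mem_range.1 hj
          rw [norm_smul]
          calc ‖cb t (j + 1)‖ * ‖a (j + 1)‖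
              ≤ ‖cb t (j + 1)‖ * ((4 * (j + 1 : ℕ) * μ / δ) ^ (j + 1) * δ) := by
                gcongr; exact ha_bd j hj'
            _ = (‖cb t (j + 1)‖ * (4 * (j + 1 : ℕ) * μ / δ) ^ (j + 1)) * δ := by ring
            _ ≤ _ := by gcongr; exact term_bound hδ hμ0 hm ht hj'
      _ ≤ 1 / 3 * δ := by
          rw [← Finset.sum_mul]; gcongr; exact geom4 m
      _ < δ := by linarith
  have hQbd : ∀ t : ℂ, ‖t‖ ≤ 3 * m → ‖Q t‖ ≤ 2 * M := by
    intro t ht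
    rw [hQ]
    simp only
    calc ‖∑ j ∈ Finset.range (m + 1), cb t j * b j‖
        ≤ ∑ j ∈ Finset.range (m + 1), (1 / 4) ^ j * M := by
          refine norm_sum_le_of_le _ fun j hj => ?_
          have hj' : j ≤ m := Nat.lt_succ_iff.1 (Finset.mem_range.1 hj)
          rw [norm_mul]
          calc ‖cb t j‖ * ‖b j‖
              ≤ ‖cb t j‖ * ((4 * j * μ / δ) ^ j * M) := by
                gcongr; exact hb_bd j hj'
            _ = (‖cb t j‖ * (4 * j * μ / δ) ^ j) * M := by ring
            _ ≤ _ := by gcongr; exact term_bound hδ hμ0 hm ht hj'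
      _ ≤ 2 * M := by
          rw [← Finset.sum_mul, Finset.sum_range_succ']
          gcongr
          have := geom4 m
          norm_num at this ⊢; linarith
  set h : ℂ → ℂ := fun t => g (P t) - Q t with hh
  have hhd : DifferentiableOn ℂ h (ball 0 (3 * m)) := by
    intro t ht
    have ht' : ‖t‖ ≤ 3 * m := (mem_ball_zero_iff.1 ht).le
    have : DifferentiableAt ℂ g (P t) :=
      hg.differentiableAt (isOpen_ball.mem_nhds (hPball t ht'))
    exact ((this.comp t (hPd t)).sub (hQd t)).differentiableWithinAt
  have hhz : ∀ k : ℕ, k ≤ m → h k = 0 := by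
    intro k hk
    have e1 : P k = f^[k] x₀ := by
      have := newton (f := f) (g := fun x : X => x) x₀ hk
      rw [this, hP]
      simp only [cb_nat]
      refine Finset.sum_congr rfl fun j _ => ?_
      rw [Nat.cast_smul_eq_nsmul]
    have e2 : Q k = g (f^[k] x₀) := by
      have := newton (f := f) (g := g) x₀ hk
      rw [this, hQ]
      simp only [cb_nat]
      refine Finset.sum_congr rfl fun j _ => ?_
      rw [nsmul_eq_mul]
    rw [hh]; simp only; rw [e1, e2, sub_self]
  have h00 : h 0 = 0 := by simpa using hhz 0 (by omega)
  have hP0 : P 0 = x₀ := by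
    have := newton (f := f) (g := fun x : X => x) x₀ (Nat.zero_le m)
    have e : P ((0:ℕ):ℂ) = x₀ := by
      rw [hP]; simp only [cb_nat]
      rw [Function.iterate_zero, id] at this
      conv_rhs => rw [this]
      refine Finset.sum_congr rfl fun j _ => ?_
      rw [Nat.cast_smul_eq_nsmul]
    simpa using e
  -- derivative at zero
  have hPder : HasDerivAt P (∑ j ∈ Finset.range m, cc j • a (j + 1)) 0 := by
    have e : P = fun t => ∑ j ∈ Finset.range m, cb t (j + 1) • a (j + 1) + x₀ := by
      funext t; rw [hP]; simp only; rw [Finset.sum_range_succ', hcb0, one_smul, ha0]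
    rw [e]
    exact (HasDerivAt.fun_sum fun j _ => (cb_deriv j).smul_const (a (j + 1))).add_const _
  have hQder : HasDerivAt Q (∑ j ∈ Finset.range m, cc j * b (j + 1)) 0 := by
    have e : Q = fun t => ∑ j ∈ Finset.range m, cb t (j + 1) * b (j + 1) + b 0 := by
      funext t; rw [hQ]; simp only; rw [Finset.sum_range_succ', hcb0, one_mul]
    rw [e]
    exact (HasDerivAt.fun_sum fun j _ => (cb_deriv j).mul_const (b (j + 1))).add_const _
  have hgder : HasFDerivAt g (fderiv ℂ g x₀) (P 0) := by
    rw [hP0]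
    exact (hg.differentiableAt (ball_mem_nhds x₀ hδ)).hasFDerivAt
  have hhder : deriv h 0 = fderiv ℂ g x₀ (∑ j ∈ Finset.range m, cc j • a (j + 1))
      - ∑ j ∈ Finset.range m, cc j * b (j + 1) :=
    ((hgder.comp_hasDerivAt 0 hPder).sub hQder).deriv
  rw [norm_sub_rev]
  rw [show fderiv ℂ g x₀ (∑ j ∈ Finset.range m, cc j • (dD f)^[j + 1] (fun x => x) x₀)
    - ∑ j ∈ Finset.range m, cc j * (dD f)^[j + 1] g x₀ = dslope h 0 0 by
      rw [dslope_same, hhder]]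
  have hz := zeros_bound (ρ := 5 / 2 * m) (ρ' := 3 * m) (m := m) (by linarith) (by linarith) m le_rfl
    (dslope h 0) (2 * M) ?_ ?_ ?_
  · refine hz.trans ?_
    gcongr
    rw [show (5 / 2 * m - m : ℝ) = 3 / 2 * m by ring, mul_pow, div_le_iff₀ (by positivity)]
    have e : ((2:ℝ) / 3) ^ m * ((3 / 2) ^ m * m ^ m) = m ^ m := by
      rw [← mul_assoc, ← mul_pow]; norm_num
    rw [e]
    exact_mod_cast Nat.factorial_le_pow m
  · exact (Complex.differentiableOn_dslope (ball_mem_nhds 0 (by linarith))).2 hhd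
  · intro t ht
    rw [mem_sphere_zero_iff_norm] at ht
    have e := sub_smul_dslope h 0 t
    rw [h00, sub_zero, sub_zero, smul_eq_mul] at e
    have hb3 : ‖h t‖ ≤ 3 * M := by
      have h1 := hM _ (hPball t (by rw [ht]; linarith))
      have h2 := hQbd t (by rw [ht]; linarith)
      calc ‖h t‖ ≤ ‖g (P t)‖ + ‖Q t‖ := norm_sub_le _ _
        _ ≤ 3 * M := by linarith
    rw [← e, norm_mul, ht] at hb3
    nlinarith [norm_nonneg (dslope h 0 t)]
  · intro k hk1 hk2
    have e := sub_smul_dslope h 0 (k:ℂ)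
    rw [h00, sub_zero, sub_zero, smul_eq_mul, hhz k hk2] at e
    refine (mul_eq_zero.1 e).resolve_left ?_
    exact_mod_cast (by omega : k ≠ 0)

end Nek

namespace Nek
open Metric

theorem fwdDiff_congr {Y : Type*} [AddCommGroup Y] (u w : ℕ → Y) (j : ℕ) :
    ∀ n n' : ℕ, (∀ i ≤ j, u (n + i) = w (n' + i)) →
      (fwdDiff 1)^[j] u n = (fwdDiff 1)^[j] w n' := by
  induction j with
  | zero => intro n n' h; simpa using h 0 le_rfl
  | succ j ih =>
    intro n n' h
    rw [Function.iterate_succ_apply', Function.iterate_succ_apply', fwdDiff, fwdDiff]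
    rw [ih n n' fun i hi => h i (by omega), ih (n + 1) (n' + 1) fun i hi => ?_]
    have := h (i + 1) (by omega)
    rw [show n + 1 + i = n + (i + 1) by ring, show n' + 1 + i = n' + (i + 1) by ring, this]

/-- The approximately conserved energy of an orbit. -/
noncomputable def En {d : ℕ} (m : ℕ) (y : ℕ → (Fin d → ℂ) × (Fin d → ℂ)) (Sq : ℕ → ℂ) (n : ℕ) : ℂ :=
  ∑ i, (y n).1 i * (∑ j ∈ Finset.range m, cc j * (fwdDiff 1)^[j + 1] (fun k => (y k).2 i) n)
    - ∑ j ∈ Finset.range m, cc j * (fwdDiff 1)^[j] Sq n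

/-- projection to an angle coordinate -/
noncomputable def pr {d : ℕ} (i : Fin d) : ((Fin d → ℂ) × (Fin d → ℂ)) →L[ℂ] ℂ :=
  (ContinuousLinearMap.proj i).comp (ContinuousLinearMap.snd ℂ _ _)

@[simp] theorem pr_apply {d : ℕ} (i : Fin d) (z : (Fin d → ℂ) × (Fin d → ℂ)) : pr i z = z.2 i := rfl

theorem snd_le {d : ℕ} (z : (Fin d → ℂ) × (Fin d → ℂ)) (i : Fin d) : ‖z.2 i‖ ≤ ‖z‖ :=
  (norm_le_pi_norm z.2 i).trans (norm_snd_le z)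

theorem fst_le {d : ℕ} (z : (Fin d → ℂ) × (Fin d → ℂ)) (i : Fin d) : ‖z.1 i‖ ≤ ‖z‖ :=
  (norm_le_pi_norm z.1 i).trans (norm_fst_le z)

section
variable {d : ℕ} {f : (Fin d → ℂ) × (Fin d → ℂ) → (Fin d → ℂ) × (Fin d → ℂ)}
  {S : (Fin d → ℂ) × (Fin d → ℂ) → ℂ} {y : ℕ → (Fin d → ℂ) × (Fin d → ℂ)} {Sq : ℕ → ℂ} {n m : ℕ}

theorem orbit_eq (hfy : ∀ k, n ≤ k → k ≤ n + m → f (y k) = y (k + 1)) (i : ℕ) (hi : i ≤ m + 1) :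
    y (n + i) = f^[i] (y n) := by
  induction i with
  | zero => rfl
  | succ i ih =>
    rw [Function.iterate_succ_apply', ← ih (by omega), hfy (n + i) (by omega) (by omega)]; rfl

theorem fd_phi (hfy : ∀ k, n ≤ k → k ≤ n + m → f (y k) = y (k + 1)) (i : Fin d) (j : ℕ)
    (hj : j ≤ m) : (fwdDiff 1)^[j] (fun k => (y k).2 i) n = ((dD f)^[j] (fun x => x) (y n)).2 i := by
  rw [fwdDiff_congr (fun k => (y k).2 i) (fun k => pr i (f^[k] (y n))) j n 0 ?_]
  · rw [dD_iter_comp (f := f) (g := pr i) j 0 (y n)]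
    have := dD_iter_clm (f := f) (g := fun x => x) (pr i) j
    exact congrFun this (y n)
  · intro k hk
    simp only [zero_add, pr_apply]
    rw [orbit_eq hfy k (by omega)]

theorem fd_phi1 (hfy : ∀ k, n ≤ k → k ≤ n + m → f (y k) = y (k + 1)) (i : Fin d) (j : ℕ)
    (c : ℂ) : (fwdDiff 1)^[j + 1] (fun k => (y k).2 i) (n + 1) =
      (dD f)^[j + 1] (fun x => (f x).2 i - c) (y n) ∨ m ≤ j := by
  by_cases hjm : m ≤ j
  · exact Or.inr hjm
  left
  rw [fwdDiff_congr (fun k => (y k).2 i) (fun k => pr i (f^[k] (y n))) (j + 1) (n + 1) 1 ?_]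
  · rw [dD_iter_comp (f := f) (g := pr i) (j + 1) 1 (y n)]
    rw [dD_iter_subconst (f := f) (g := fun x => (f x).2 i)]
    have := dD_iter_compf (f := f) (g := pr i) (j + 1)
    exact (congrFun this (y n)).symm
  · intro k hk
    simp only [pr_apply]
    rw [add_assoc, orbit_eq hfy (1 + k) (by omega)]

theorem fd_S (hfy : ∀ k, n ≤ k → k ≤ n + m → f (y k) = y (k + 1))
    (hSy : ∀ k, n ≤ k → k ≤ n + m → S (y k) = Sq k) (j : ℕ)
    (hj : j ≤ m) : (fwdDiff 1)^[j] Sq n = (dD f)^[j] S (y n) := by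
  rw [fwdDiff_congr Sq (fun k => S (f^[k] (y n))) j n 0 ?_]
  · exact dD_iter_comp (f := f) (g := S) j 0 (y n)
  · intro k hk
    simp only [zero_add]
    rw [← orbit_eq hfy k (by omega), hSy _ (by omega) (by omega)]

theorem energy_drift {δ μ MS MJ : ℝ} (hδ : 0 < δ)
    (hf : DifferentiableOn ℂ f (ball (y n) δ)) (hμ : ∀ x ∈ ball (y n) δ, ‖f x - x‖ ≤ μ)
    (hS : DifferentiableOn ℂ S (ball (y n) δ)) (hMS : ∀ x ∈ ball (y n) δ, ‖S x‖ ≤ MS)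
    (hMJ : ‖(f (y n)).1‖ ≤ MJ)
    (hex : ∀ v, fderiv ℂ S (y n) v = ∑ i, (f (y n)).1 i * (fderiv ℂ f (y n) v).2 i
      - ∑ i, (y n).1 i * v.2 i)
    (hfy : ∀ k, n ≤ k → k ≤ n + m → f (y k) = y (k + 1))
    (hSy : ∀ k, n ≤ k → k ≤ n + m → S (y k) = Sq k)
    (hm1 : 1 ≤ m) (hm : 200 * m * μ ≤ δ) :
    ‖En m y Sq (n + 1) - En m y Sq n‖ ≤ (2 * MS + 4 * d * MJ * δ) * (2 / 3) ^ m := by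
  have hμ0 : 0 ≤ μ := (norm_nonneg _).trans (hμ _ (mem_ball_self hδ))
  have hm0 : (1:ℝ) ≤ m := by exact_mod_cast hm1
  have hμδ : μ ≤ δ := by nlinarith
  set x₀ := y n with hx0
  set V : (Fin d → ℂ) × (Fin d → ℂ) := ∑ j ∈ Finset.range m, cc j • (dD f)^[j + 1] (fun x => x) x₀ with hV
  have hA := propA hδ hf hμ hS hMS hm1 hm
  have hB : ∀ i : Fin d, ‖∑ j ∈ Finset.range m, cc j * (dD f)^[j + 1] (fun x => (f x).2 i - x₀.2 i) x₀
      - (fderiv ℂ f x₀ V).2 i‖ ≤ 2 * (2 * δ) * (2 / 3) ^ m := by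
    intro i
    have hd : DifferentiableOn ℂ (fun x => (f x).2 i - x₀.2 i) (ball x₀ δ) :=
      ((pr i).differentiable.comp_differentiableOn hf).sub_const _
    have h := propA (g := fun x => (f x).2 i - x₀.2 i) (M := 2 * δ) hδ hf hμ hd ?_ hm1 hm
    · have hfx : HasFDerivAt f (fderiv ℂ f x₀) x₀ :=
        (hf.differentiableAt (ball_mem_nhds x₀ hδ)).hasFDerivAt
      have e : fderiv ℂ (fun x => (f x).2 i - x₀.2 i) x₀ = (pr i).comp (fderiv ℂ f x₀) :=
        (((pr i).hasFDerivAt.comp x₀ hfx).sub_const (x₀.2 i)).fderiv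
      rw [e] at h
      exact h
    · intro z hz
      have h1 := snd_le (f z - x₀) i
      have h2 := norm_add_le (f z - z) (z - x₀)
      rw [sub_add_sub_cancel] at h2
      have h3 := hμ z hz
      rw [mem_ball, dist_eq_norm] at hz
      have e : (f z - x₀).2 i = (f z).2 i - x₀.2 i := rfl
      rw [e] at h1
      linarith
  -- rewrite the energies
  have e1 : ∑ j ∈ Finset.range m, cc j * (fwdDiff 1)^[j] Sq (n + 1)
      - ∑ j ∈ Finset.range m, cc j * (fwdDiff 1)^[j] Sq n
      = ∑ j ∈ Finset.range m, cc j * (dD f)^[j + 1] S x₀ := by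
    rw [← Finset.sum_sub_distrib]
    refine Finset.sum_congr rfl fun j hj => ?_
    rw [← fd_S hfy hSy (j + 1) (by have := Finset.mem_range.1 hj; omega), ← mul_sub,
      Function.iterate_succ_apply', fwdDiff]
  have e2 : ∀ i, ∑ j ∈ Finset.range m, cc j * (fwdDiff 1)^[j + 1] (fun k => (y k).2 i) n
      = V.2 i := by
    intro i
    have : V.2 i = pr i V := rfl
    rw [this, hV, map_sum]
    refine Finset.sum_congr rfl fun j hj => ?_
    rw [fd_phi hfy i (j + 1) (by have := Finset.mem_range.1 hj; omega), map_smul, smul_eq_mul]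
    rfl
  have e3 : ∀ i, ∑ j ∈ Finset.range m, cc j * (fwdDiff 1)^[j + 1] (fun k => (y k).2 i) (n + 1)
      = ∑ j ∈ Finset.range m, cc j * (dD f)^[j + 1] (fun x => (f x).2 i - x₀.2 i) x₀ := by
    intro i
    refine Finset.sum_congr rfl fun j hj => ?_
    have hj' := Finset.mem_range.1 hj
    rw [(fd_phi1 hfy i j (x₀.2 i)).resolve_right (by omega)]
  have hy1 : y (n + 1) = f x₀ := (hfy n le_rfl (by omega)).symm
  have e4 : En m y Sq (n + 1) - En m y Sq n =
      ∑ i, (f x₀).1 i * (∑ j ∈ Finset.range m, cc j * (dD f)^[j + 1] (fun x => (f x).2 i - x₀.2 i) x₀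
        - (fderiv ℂ f x₀ V).2 i)
      - (∑ j ∈ Finset.range m, cc j * (dD f)^[j + 1] S x₀ - fderiv ℂ S x₀ V) := by
    rw [hex V, ← e1]
    unfold En
    simp only [e2, e3, hy1, ← hx0, mul_sub, Finset.sum_sub_distrib]
    ring
  rw [e4]
  refine (norm_sub_le _ _).trans ?_
  have h5 : ‖∑ i, (f x₀).1 i * (∑ j ∈ Finset.range m, cc j * (dD f)^[j + 1] (fun x => (f x).2 i - x₀.2 i) x₀
        - (fderiv ℂ f x₀ V).2 i)‖ ≤ ∑ i : Fin d, MJ * (2 * (2 * δ) * (2 / 3) ^ m) := by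
    refine norm_sum_le_of_le _ fun i _ => ?_
    rw [norm_mul]
    have h6 : ‖(f x₀).1 i‖ ≤ MJ := (norm_le_pi_norm (f x₀).1 i).trans hMJ
    exact mul_le_mul h6 (hB i) (norm_nonneg _) ((norm_nonneg _).trans h6)
  rw [Finset.sum_const, Finset.card_univ, Fintype.card_fin, nsmul_eq_mul] at h5
  calc _ ≤ _ := add_le_add h5 hA
    _ = _ := by ring

theorem sq_le_pow4 (j : ℕ) : ((j + 2 : ℕ) : ℝ) ^ 2 ≤ 4 * 4 ^ j := by
  induction j with
  | zero => norm_num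
  | succ j ih =>
    push_cast at *
    rw [pow_succ 4]
    nlinarith [Nat.cast_nonneg (α := ℝ) j]

theorem lin_le_pow4 (j : ℕ) : ((j + 1 : ℕ) : ℝ) ≤ 4 ^ j := by
  induction j with
  | zero => norm_num
  | succ j ih =>
    push_cast at *
    rw [pow_succ]
    nlinarith [Nat.cast_nonneg (α := ℝ) j]

theorem geom4' (n : ℕ) : ∑ j ∈ Finset.range n, (1 / 4 : ℝ) ^ j ≤ 4 / 3 := by
  have h := geom4 n
  simp only [pow_succ, ← Finset.sum_mul] at h
  linarith

theorem energy_lead {δ μ MS MJ : ℝ} (hδ : 0 < δ)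
    (hf : DifferentiableOn ℂ f (ball (y n) δ)) (hμ : ∀ x ∈ ball (y n) δ, ‖f x - x‖ ≤ μ)
    (hS : DifferentiableOn ℂ S (ball (y n) δ)) (hMS : ∀ x ∈ ball (y n) δ, ‖S x‖ ≤ MS)
    (hMJ : ‖(y n).1‖ ≤ MJ)
    (hfy : ∀ k, n ≤ k → k ≤ n + m → f (y k) = y (k + 1))
    (hSy : ∀ k, n ≤ k → k ≤ n + m → S (y k) = Sq k)
    (hm1 : 1 ≤ m) (hm : 200 * m * μ ≤ δ) :
    ‖En m y Sq n - (∑ i, (y n).1 i * ((y (n + 1)).2 i - (y n).2 i) - Sq n)‖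
      ≤ 96 * d * MJ * μ ^ 2 / δ + 8 * MS * μ / δ := by
  have hμ0 : 0 ≤ μ := (norm_nonneg _).trans (hμ _ (mem_ball_self hδ))
  have hMS0 : 0 ≤ MS := (norm_nonneg _).trans (hMS _ (mem_ball_self hδ))
  have hMJ0 : 0 ≤ MJ := (norm_nonneg _).trans hMJ
  obtain ⟨l, rfl⟩ : ∃ l, m = l + 1 := ⟨m - 1, by omega⟩
  set q : ℝ := 4 * μ / δ with hq
  have hq0 : 0 ≤ q := by positivity
  have hqj : ∀ j : ℕ, j ≤ l + 1 → j * q ≤ 1 / 50 := by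
    intro j hj
    have : (j:ℝ) ≤ (l + 1 : ℕ) := by exact_mod_cast hj
    rw [hq, mul_div_assoc', div_le_iff₀ hδ]
    nlinarith [mul_le_mul_of_nonneg_right this hμ0]
  have hjm : ∀ j : ℕ, j ≤ l + 1 → 4 * (j:ℝ) * μ ≤ δ := by
    intro j hj
    have h := hqj j hj
    rw [hq, mul_div_assoc', div_le_iff₀ hδ] at h
    linarith
  have b1 : ∀ j, j < l → ‖(dD f)^[j + 1 + 1] (fun x => x) (y n)‖ ≤ 4 * q ^ 2 * δ * (1 / 4) ^ j := by
    intro j hj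
    refine (dD_id_bound hδ hf hμ (j + 1) (hjm _ (by omega))).trans ?_
    have e : (4 * ((j + 1 + 1 : ℕ) : ℝ) * μ / δ) = (j + 2 : ℕ) * q := by rw [hq]; push_cast; ring
    have e2 : ∀ r : ℝ, r ^ (j + 1 + 1) = r ^ 2 * r ^ j := fun r => by ring
    rw [e, e2]
    calc ((j + 2 : ℕ) * q) ^ 2 * ((j + 2 : ℕ) * q) ^ j * δ
        ≤ ((j + 2 : ℕ) * q) ^ 2 * (1 / 50) ^ j * δ := by
          gcongr; exact hqj _ (by omega)
      _ = ((j + 2 : ℕ) : ℝ) ^ 2 * (1 / 50) ^ j * (q ^ 2 * δ) := by ring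
      _ ≤ (4 * 4 ^ j) * (1 / 50) ^ j * (q ^ 2 * δ) := by
          gcongr; exact sq_le_pow4 j
      _ = (4 * (1 / 50)) ^ j * (4 * (q ^ 2 * δ)) := by rw [mul_pow]; ring
      _ ≤ (1 / 4) ^ j * (4 * (q ^ 2 * δ)) := by
          refine mul_le_mul_of_nonneg_right (pow_le_pow_left₀ (by norm_num) (by norm_num) _) (by positivity)
      _ = _ := by ring
  have b2 : ∀ j, j < l → ‖(dD f)^[j + 1] S (y n)‖ ≤ q * MS * (1 / 4) ^ j := by
    intro j hj
    refine (dD_center hδ hf hμ hS hMS (j + 1) (hjm _ (by omega))).trans ?_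
    have e : (4 * ((j + 1 : ℕ) : ℝ) * μ / δ) = (j + 1 : ℕ) * q := by rw [hq]; push_cast; ring
    rw [e, pow_succ]
    calc ((j + 1 : ℕ) * q) ^ j * ((j + 1 : ℕ) * q) * MS
        ≤ (1 / 50) ^ j * (4 ^ j * q) * MS := by
          gcongr
          · exact hqj _ (by omega)
          · exact lin_le_pow4 j
      _ = (4 * (1 / 50)) ^ j * (q * MS) := by rw [mul_pow]; ring
      _ ≤ (1 / 4) ^ j * (q * MS) := by
          refine mul_le_mul_of_nonneg_right (pow_le_pow_left₀ (by norm_num) (by norm_num) _) (by positivity)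
      _ = _ := by ring
  have hcc0 : cc 0 = 1 := by simp [cc]
  have e : En (l + 1) y Sq n - (∑ i, (y n).1 i * ((y (n + 1)).2 i - (y n).2 i) - Sq n)
      = ∑ i, (y n).1 i * (∑ j ∈ Finset.range l, cc (j + 1) * ((dD f)^[j + 1 + 1] (fun x => x) (y n)).2 i)
        - ∑ j ∈ Finset.range l, cc (j + 1) * (dD f)^[j + 1] S (y n) := by
    unfold En
    have h1 : ∀ i, ∑ j ∈ Finset.range (l + 1), cc j * (fwdDiff 1)^[j + 1] (fun k => (y k).2 i) n
        = ∑ j ∈ Finset.range l, cc (j + 1) * ((dD f)^[j + 1 + 1] (fun x => x) (y n)).2 i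
          + ((y (n + 1)).2 i - (y n).2 i) := by
      intro i
      rw [Finset.sum_range_succ', hcc0, one_mul]
      congr 1
      refine Finset.sum_congr rfl fun j hj => ?_
      rw [fd_phi hfy i (j + 1 + 1) (by have := Finset.mem_range.1 hj; omega)]
    have h2 : ∑ j ∈ Finset.range (l + 1), cc j * (fwdDiff 1)^[j] Sq n
        = ∑ j ∈ Finset.range l, cc (j + 1) * (dD f)^[j + 1] S (y n) + Sq n := by
      rw [Finset.sum_range_succ', hcc0, one_mul]
      congr 1
      refine Finset.sum_congr rfl fun j hj => ?_
      rw [fd_S hfy hSy (j + 1) (by have := Finset.mem_range.1 hj; omega)]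
    simp only [h1, h2, mul_add, Finset.sum_add_distrib]
    ring
  rw [e]
  refine (norm_sub_le _ _).trans ?_
  have g1 : ∀ i, ‖(y n).1 i * (∑ j ∈ Finset.range l, cc (j + 1) * ((dD f)^[j + 1 + 1] (fun x => x) (y n)).2 i)‖
      ≤ MJ * (4 * q ^ 2 * δ * (4 / 3)) := by
    intro i
    rw [norm_mul]
    refine mul_le_mul ((norm_le_pi_norm _ i).trans hMJ) ?_ (norm_nonneg _) hMJ0
    calc _ ≤ ∑ j ∈ Finset.range l, 4 * q ^ 2 * δ * (1 / 4) ^ j := by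
          refine norm_sum_le_of_le _ fun j hj => ?_
          rw [norm_mul]
          calc _ ≤ 1 * ‖((dD f)^[j + 1 + 1] (fun x => x) (y n)).2 i‖ := by
                gcongr; exact cc_norm _
            _ ≤ _ := by
                rw [one_mul]; exact (snd_le _ i).trans (b1 j (Finset.mem_range.1 hj))
      _ ≤ _ := by
          rw [← Finset.mul_sum]; gcongr; exact geom4' l
  have g2 : ‖∑ j ∈ Finset.range l, cc (j + 1) * (dD f)^[j + 1] S (y n)‖ ≤ q * MS * (4 / 3) := by
    calc _ ≤ ∑ j ∈ Finset.range l, q * MS * (1 / 4) ^ j := by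
          refine norm_sum_le_of_le _ fun j hj => ?_
          rw [norm_mul]
          calc _ ≤ 1 * ‖(dD f)^[j + 1] S (y n)‖ := by
                gcongr; exact cc_norm _
            _ ≤ _ := by
                rw [one_mul]; exact b2 j (Finset.mem_range.1 hj)
      _ ≤ _ := by
          rw [← Finset.mul_sum]; gcongr; exact geom4' l
  have g3 := norm_sum_le_of_le Finset.univ (fun i (_ : i ∈ Finset.univ) => g1 i)
  rw [Finset.sum_const, Finset.card_univ, Fintype.card_fin, nsmul_eq_mul] at g3
  refine (add_le_add g3 g2).trans ?_
  have r1 : (d:ℝ) * (MJ * (4 * q ^ 2 * δ * (4 / 3))) = (256 / 3) * (d * MJ * μ ^ 2 / δ) := by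
    rw [hq]; field_simp; ring
  have r2 : q * MS * (4 / 3) = (16 / 3) * (MS * μ / δ) := by rw [hq]; field_simp; ring
  rw [r1, r2]
  have p1 : 0 ≤ d * MJ * μ ^ 2 / δ := by positivity
  have p2 : 0 ≤ MS * μ / δ := by positivity
  calc _ ≤ 96 * (d * MJ * μ ^ 2 / δ) + 8 * (MS * μ / δ) := by linarith
    _ = _ := by ring
end
end Nek

namespace Nek
open Metric

theorem near_id_inverse {E : Type*} [NormedAddCommGroup E] [NormedSpace ℂ E] [CompleteSpace E]
    {a : E → E} {x₀ : E} {δ κ : ℝ} (hδ : 0 < δ) 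
    (ha : DifferentiableOn ℂ a (ball x₀ (3 * δ / 4))) (hκ : ∀ z ∈ ball x₀ (3 * δ / 4), ‖a z‖ ≤ κ)
    (hsm : 16 * κ ≤ δ) :
    ∃ b : E → E, DifferentiableOn ℂ b (ball x₀ (δ / 2)) ∧ ∀ y ∈ ball x₀ (δ / 2),
      b y ∈ ball x₀ (5 * δ / 8) ∧ b y + a (b y) = y ∧
      ∀ z ∈ ball x₀ (5 * δ / 8), z + a z = y → z = b y := by
  have hκ0 : 0 ≤ κ := (norm_nonneg _).trans (hκ x₀ (mem_ball_self (by linarith)))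
  have hlip : ∀ z ∈ ball x₀ (5 * δ / 8), ∀ w ∈ ball x₀ (5 * δ / 8), ‖a z - a w‖ ≤ 1 / 2 * ‖z - w‖ := by
    intro z hz w hw
    have h58 : 5 * δ / 8 = 3 * δ / 4 - δ / 8 := by ring
    rw [h58] at hz hw
    have h := lip_ball (a := δ / 8) (by linarith) ha hκ hw hz
    refine h.trans ?_
    refine mul_le_mul_of_nonneg_right ?_ (norm_nonneg _)
    rw [div_le_iff₀ (by linarith)]; linarith
  have huniq : ∀ y, ∀ z ∈ ball x₀ (5 * δ / 8), ∀ w ∈ ball x₀ (5 * δ / 8), ∀ y', z + a z = y → w + a w = y' →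
      ‖z - w‖ ≤ 2 * ‖y - y'‖ := by
    intro y z hz w hw y' e e'
    have h1 := hlip z hz w hw
    have h2 : z - w = (y - y') - (a z - a w) := by rw [← e, ← e']; abel
    have h3 := norm_sub_le (y - y') (a z - a w)
    rw [← h2] at h3
    linarith
  have hex : ∀ y ∈ ball x₀ (δ / 2), ∃ z ∈ ball x₀ (5 * δ / 8), z + a z = y := by
    intro y hy
    have hsub : closedBall y (δ / 16) ⊆ ball x₀ (5 * δ / 8) := by
      intro z hz
      rw [mem_closedBall] at hz
      rw [mem_ball] at hy ⊢
      linarith [dist_triangle z y x₀]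
    have hmaps : Set.MapsTo (fun z => y - a z) (closedBall y (δ / 16)) (closedBall y (δ / 16)) := by
      intro z hz
      have := hκ z (ball_subset_ball (by linarith) (hsub hz))
      rw [mem_closedBall, dist_eq_norm]
      simp only [sub_sub_cancel_left, norm_neg]
      linarith
    have hc : ContractingWith (1 / 2 : NNReal) (hmaps.restrict _ _ _) := by
      refine ⟨by rw [← NNReal.coe_lt_coe]; norm_num, LipschitzWith.of_dist_le_mul fun z w => ?_⟩
      rw [Subtype.dist_eq, Subtype.dist_eq, dist_eq_norm, dist_eq_norm]
      simp only [Set.MapsTo.val_restrict_apply]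
      have h := hlip w (hsub w.2) z (hsub z.2)
      rw [show y - a z - (y - a w) = a w - a z by abel, norm_sub_rev (z : E) w]
      simpa using h
    obtain ⟨z, hz, hfix, -⟩ := hc.exists_fixedPoint' isClosed_closedBall.isComplete hmaps
      (mem_closedBall_self (x := y) (by linarith)) (edist_ne_top _ _)
    refine ⟨z, hsub hz, ?_⟩
    have : y - a z = z := hfix
    exact (sub_eq_iff_eq_add.1 this).symm
  choose! b hb1 hb2 using hex
  refine ⟨b, ?_, fun y hy => ⟨hb1 y hy, hb2 y hy, fun z hz e => ?_⟩⟩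
  · intro y hy
    have hcont : ContinuousAt b y := by
      rw [Metric.continuousAt_iff]
      intro ε hε
      obtain ⟨r, hr, hrb⟩ := Metric.isOpen_ball.mem_nhds hy |> Metric.mem_nhds_iff.1
      refine ⟨min r (ε / 2), lt_min hr (by linarith), fun y' hy' => ?_⟩
      have hy'b : y' ∈ ball x₀ (δ / 2) := hrb (lt_of_lt_of_le hy' (min_le_left _ _))
      have h := huniq y' _ (hb1 y' hy'b) _ (hb1 y hy) y (hb2 y' hy'b) (hb2 y hy)
      have h2 : dist y' y < ε / 2 := lt_of_lt_of_le hy' (min_le_right _ _)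
      rw [dist_eq_norm] at h2 ⊢
      linarith
    have hda : HasFDerivAt a (fderiv ℂ a (b y)) (b y) :=
      (ha.differentiableAt (isOpen_ball.mem_nhds
        (ball_subset_ball (by linarith) (hb1 y hy)))).hasFDerivAt
    have hnorm : ‖-fderiv ℂ a (b y)‖ < 1 := by
      rw [norm_neg]
      have h := cauchy_fderiv_ball (a := δ / 8) (x := b y) (by linarith) ha hκ
        (by rw [show 3 * δ / 4 - δ / 8 = 5 * δ / 8 by ring]; exact hb1 y hy)
      refine lt_of_le_of_lt h ?_
      rw [div_lt_one (by linarith)]; linarith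
    have hA : HasFDerivAt (fun z => z + a z)
        ((ContinuousLinearEquiv.ofUnit (Units.oneSub _ hnorm) : E ≃L[ℂ] E) : E →L[ℂ] E) (b y) := by
      have h := (hasFDerivAt_id (b y)).add hda
      refine h.congr_fderiv ?_
      have e : ((ContinuousLinearEquiv.ofUnit (Units.oneSub _ hnorm) : E ≃L[ℂ] E) : E →L[ℂ] E)
          = ((Units.oneSub _ hnorm : (E →L[ℂ] E)ˣ) : E →L[ℂ] E) := rfl
      rw [e, Units.val_oneSub, sub_neg_eq_add]
      rfl
    refine (HasFDerivAt.of_local_left_inverse hcont hA ?_).differentiableAt.differentiableWithinAt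
    filter_upwards [isOpen_ball.mem_nhds hy] with y' hy'
    exact hb2 y' hy'
  · have h := huniq y z hz _ (hb1 y hy) y e (hb2 y hy)
    rw [sub_self, norm_zero, mul_zero] at h
    exact sub_eq_zero.1 (norm_le_zero_iff.1 h)

variable {d : ℕ}

/-- One step of the map generated by `w.1 • z.2 + g (w.1, z.2)`, `w` the image of `z`. -/
def Step (g : (Fin d → ℂ) × (Fin d → ℂ) → ℂ) (z z' : (Fin d → ℂ) × (Fin d → ℂ)) : Prop :=
  (∀ i, z'.1 i = z.1 i - fderiv ℂ g (z'.1, z.2) (0, Pi.single i 1)) ∧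
  (∀ i, z'.2 i = z.2 i + fderiv ℂ g (z'.1, z.2) (Pi.single i 1, 0))

theorem single_fst (i : Fin d) : ‖((Pi.single i 1, 0) : (Fin d → ℂ) × (Fin d → ℂ))‖ = 1 := by
  rw [Prod.norm_def]; simp [Pi.norm_single]

theorem single_snd (i : Fin d) : ‖((0, Pi.single i 1) : (Fin d → ℂ) × (Fin d → ℂ))‖ = 1 := by
  rw [Prod.norm_def]; simp [Pi.norm_single]

theorem clm_expand (l : ((Fin d → ℂ) × (Fin d → ℂ)) →L[ℂ] ℂ) (v : (Fin d → ℂ) × (Fin d → ℂ)) :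
    l v = ∑ i, v.1 i * l (Pi.single i 1, 0) + ∑ i, v.2 i * l (0, Pi.single i 1) := by
  have e1 : v = ∑ i, v.1 i • ((Pi.single i 1, 0) : (Fin d → ℂ) × (Fin d → ℂ))
      + ∑ i, v.2 i • ((0, Pi.single i 1) : (Fin d → ℂ) × (Fin d → ℂ)) := by
    ext k
    · simp [Prod.fst_sum, Finset.sum_apply, Pi.single_apply]
    · simp [Prod.snd_sum, Finset.sum_apply, Pi.single_apply]
  conv_lhs => rw [e1]
  simp only [map_add, map_sum, map_smul, smul_eq_mul]

theorem one_step {g : (Fin d → ℂ) × (Fin d → ℂ) → ℂ} {x₀ : (Fin d → ℂ) × (Fin d → ℂ)} {δ γ κ : ℝ}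
    (hδ : 0 < δ) (hg : AnalyticOnNhd ℂ g (ball x₀ δ)) (hγ : ∀ z ∈ ball x₀ δ, ‖g z‖ ≤ γ)
    (hκ : κ = 4 * γ / δ) (hsm : 16 * κ ≤ δ) :
    ∃ G : (Fin d → ℂ) × (Fin d → ℂ) → (Fin d → ℂ) × (Fin d → ℂ),
      DifferentiableOn ℂ G (ball x₀ (δ / 2)) ∧
      ∀ z ∈ ball x₀ (δ / 2), ((G z).1, z.2) ∈ ball x₀ (5 * δ / 8) ∧ Step g z (G z) ∧
        ‖G z - z‖ ≤ κ ∧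
        ∀ z', Step g z z' → (z'.1, z.2) ∈ ball x₀ (5 * δ / 8) → z' = G z := by
  have hγ0 : 0 ≤ γ := (norm_nonneg _).trans (hγ x₀ (mem_ball_self hδ))
  have hκ0 : 0 ≤ κ := by rw [hκ]; positivity
  have hfd : ∀ z ∈ ball x₀ (3 * δ / 4), ‖fderiv ℂ g z‖ ≤ κ := by
    intro z hz
    have h := cauchy_fderiv_ball (a := δ / 4) (x := z) (by linarith) hg.differentiableOn hγ
      (by rwa [show δ - δ / 4 = 3 * δ / 4 by ring])
    refine h.trans (le_of_eq ?_)
    rw [hκ]; field_simp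
  have happ : ∀ z ∈ ball x₀ (3 * δ / 4), ∀ v, ‖v‖ = 1 → ‖fderiv ℂ g z v‖ ≤ κ := by
    intro z hz v hv
    have := (fderiv ℂ g z).le_opNorm v
    rw [hv, mul_one] at this
    exact this.trans (hfd z hz)
  have hdiff : ∀ v, DifferentiableOn ℂ (fun z => fderiv ℂ g z v) (ball x₀ δ) := by
    intro v
    exact (hg.fderiv.differentiableOn).clm_apply (differentiableOn_const v)
  set a : (Fin d → ℂ) × (Fin d → ℂ) → (Fin d → ℂ) × (Fin d → ℂ) :=
    fun z => (fun i => fderiv ℂ g z (0, Pi.single i 1), 0) with ha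
  have had : DifferentiableOn ℂ a (ball x₀ (3 * δ / 4)) := by
    refine DifferentiableOn.prodMk ?_ (differentiableOn_const 0)
    rw [differentiableOn_pi]
    intro i
    exact (hdiff _).mono (ball_subset_ball (by linarith))
  have hab : ∀ z ∈ ball x₀ (3 * δ / 4), ‖a z‖ ≤ κ := by
    intro z hz
    rw [Prod.norm_def]
    refine max_le ?_ (by simpa [ha] using hκ0)
    rw [pi_norm_le_iff_of_nonneg hκ0]
    intro i
    exact happ z hz _ (single_snd i)
  obtain ⟨b, hbd, hb⟩ := near_id_inverse hδ had hab hsm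
  have hb2 : ∀ y ∈ ball x₀ (δ / 2), (b y).2 = y.2 := by
    intro y hy
    have := congrArg Prod.snd (hb y hy).2.1
    simpa [ha] using this
  refine ⟨fun z => ((b z).1, fun i => z.2 i + fderiv ℂ g (b z) (Pi.single i 1, 0)), ?_, ?_⟩
  · refine DifferentiableOn.prodMk hbd.fst ?_
    rw [differentiableOn_pi]
    intro i
    have h1 : DifferentiableOn ℂ (fun z : (Fin d → ℂ) × (Fin d → ℂ) => z.2 i) (ball x₀ (δ / 2)) :=
      (pr i).differentiable.differentiableOn
    refine h1.add ((hdiff _).comp hbd fun z hz => ?_)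
    exact ball_subset_ball (by linarith) (hb z hz).1
  · intro z hz
    have hbz : ((b z).1, z.2) = b z := by rw [← hb2 z hz]
    have hbz34 : b z ∈ ball x₀ (3 * δ / 4) := ball_subset_ball (by linarith) (hb z hz).1
    have hb1 : ∀ i, (b z).1 i = z.1 i - fderiv ℂ g (b z) (0, Pi.single i 1) := by
      intro i
      have := congrFun (congrArg Prod.fst (hb z hz).2.1) i
      simp only [ha, Prod.fst_add, Pi.add_apply] at this
      rw [← this]; ring
    simp only
    refine ⟨by rw [hbz]; exact (hb z hz).1, ⟨?_, ?_⟩, ?_, ?_⟩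
    · intro i; simp only; rw [hbz]; exact hb1 i
    · intro i; simp only; rw [hbz]
    · rw [Prod.norm_def]
      refine max_le ?_ ?_
      · rw [pi_norm_le_iff_of_nonneg hκ0]
        intro i
        simp only [Prod.fst_sub, Pi.sub_apply]
        rw [hb1 i, sub_sub_cancel_left, norm_neg]
        exact happ _ hbz34 _ (single_snd i)
      · rw [pi_norm_le_iff_of_nonneg hκ0]
        intro i
        simp only [Prod.snd_sub, Pi.sub_apply, add_sub_cancel_left]
        exact happ _ hbz34 _ (single_fst i)
    · intro z' hs hmem
      have h := (hb z hz).2.2 (z'.1, z.2) hmem ?_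
      · rw [← h]
        ext i
        · rfl
        · exact hs.2 i
      · ext i
        · simp only [ha, Prod.fst_add, Pi.add_apply]
          rw [hs.1 i]; ring
        · simp [ha]

/-- Exactness of one step. -/
theorem step_exact {g : (Fin d → ℂ) × (Fin d → ℂ) → ℂ}
    {G : (Fin d → ℂ) × (Fin d → ℂ) → (Fin d → ℂ) × (Fin d → ℂ)} {z : (Fin d → ℂ) × (Fin d → ℂ)}
    (hG : DifferentiableAt ℂ G z) (hg : DifferentiableAt ℂ g ((G z).1, z.2)) (hs : Step g z (G z)) :
    DifferentiableAt ℂ (fun z => ∑ i, (G z).1 i * ((G z).2 i - z.2 i) - g ((G z).1, z.2)) z ∧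
    ∀ v, fderiv ℂ (fun z => ∑ i, (G z).1 i * ((G z).2 i - z.2 i) - g ((G z).1, z.2)) z v
      = ∑ i, (G z).1 i * (fderiv ℂ G z v).2 i - ∑ i, z.1 i * v.2 i := by
  have h1 : ∀ i, HasFDerivAt (fun z => (G z).1 i)
      (((ContinuousLinearMap.proj i).comp (ContinuousLinearMap.fst ℂ (Fin d → ℂ) (Fin d → ℂ))).comp (fderiv ℂ G z)) z := 
    fun i => ((ContinuousLinearMap.proj i).comp (ContinuousLinearMap.fst ℂ (Fin d → ℂ) (Fin d → ℂ))).hasFDerivAt.comp z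
      hG.hasFDerivAt
  have h2 : ∀ i, HasFDerivAt (fun z => (G z).2 i - z.2 i) ((pr i).comp (fderiv ℂ G z) - pr i) z :=
    fun i => ((pr i).hasFDerivAt.comp z hG.hasFDerivAt).sub (pr i).hasFDerivAt
  have h3 : HasFDerivAt (fun z => g ((G z).1, z.2)) ((fderiv ℂ g ((G z).1, z.2)).comp
      (((ContinuousLinearMap.fst ℂ (Fin d → ℂ) (Fin d → ℂ)).comp (fderiv ℂ G z)).prod
        (ContinuousLinearMap.snd ℂ (Fin d → ℂ) (Fin d → ℂ)))) z := by
    have h4 : HasFDerivAt (fun z => ((G z).1, z.2)) _ z :=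
      ((ContinuousLinearMap.fst ℂ (Fin d → ℂ) (Fin d → ℂ)).hasFDerivAt.comp z
        hG.hasFDerivAt).prodMk (ContinuousLinearMap.snd ℂ (Fin d → ℂ) (Fin d → ℂ)).hasFDerivAt
    exact hg.hasFDerivAt.comp (f := fun z => ((G z).1, z.2)) z h4
  have h5 := (HasFDerivAt.fun_sum (u := Finset.univ) fun i _ => (h1 i).mul (h2 i)).sub h3
  refine ⟨h5.differentiableAt, fun v => ?_⟩
  have h6 := h5.fderiv
  have e : fderiv ℂ (fun z => ∑ i, (G z).1 i * ((G z).2 i - z.2 i) - g ((G z).1, z.2)) z v = _ :=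
    congrArg (fun l => l v) h6
  rw [e]
  simp only [ContinuousLinearMap.sub_apply, ContinuousLinearMap.sum_apply,
    ContinuousLinearMap.add_apply, ContinuousLinearMap.smul_apply, ContinuousLinearMap.comp_apply,
    ContinuousLinearMap.prod_apply, ContinuousLinearMap.coe_fst', ContinuousLinearMap.coe_snd',
    pr_apply, ContinuousLinearMap.proj_apply, smul_eq_mul]
  rw [clm_expand (fderiv ℂ g ((G z).1, z.2))]
  simp only
  rw [← sub_eq_zero]
  simp only [← Finset.sum_add_distrib, ← Finset.sum_sub_distrib]
  refine Finset.sum_eq_zero fun i _ => ?_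
  have a1 : fderiv ℂ g ((G z).1, z.2) (Pi.single i 1, 0) = (G z).2 i - z.2 i := by
    have := hs.2 i
    linear_combination -this
  have a2 : fderiv ℂ g ((G z).1, z.2) (0, Pi.single i 1) = z.1 i - (G z).1 i := by
    have := hs.1 i
    linear_combination this
  rw [a1, a2]; ring

end Nek

namespace Nek
open Metric
variable {d : ℕ}

/-- Action increment of one step. -/
def act (g : (Fin d → ℂ) × (Fin d → ℂ) → ℂ) (z z' : (Fin d → ℂ) × (Fin d → ℂ)) : ℂ :=
  ∑ i, z'.1 i * (z'.2 i - z.2 i) - g (z'.1, z.2)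

theorem chain {T : ℕ} {g : ℕ → (Fin d → ℂ) × (Fin d → ℂ) → ℂ} {x₀ : (Fin d → ℂ) × (Fin d → ℂ)}
    {δ γ κ : ℝ} (hδ : 0 < δ) (hg : ∀ k < T, AnalyticOnNhd ℂ (g k) (ball x₀ δ))
    (hγ : ∀ k < T, ∀ z ∈ ball x₀ δ, ‖g k z‖ ≤ γ) (hγ0 : 0 ≤ γ)
    (hκ : κ = 4 * γ / δ) (hsm : 16 * κ ≤ δ) (hT : T * κ ≤ δ / 4)
    (h3 : ∀ z ∈ ball x₀ δ, ‖z.1‖ ≤ 3) (n : ℕ) (hn : n ≤ T) :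
    ∃ (f : (Fin d → ℂ) × (Fin d → ℂ) → (Fin d → ℂ) × (Fin d → ℂ))
      (S : (Fin d → ℂ) × (Fin d → ℂ) → ℂ),
      DifferentiableOn ℂ f (ball x₀ (δ / 4)) ∧ DifferentiableOn ℂ S (ball x₀ (δ / 4)) ∧
      ∀ z ∈ ball x₀ (δ / 4), ‖f z - z‖ ≤ n * κ ∧ ‖S z‖ ≤ n * (3 * d * κ + γ) ∧
        (∀ v, fderiv ℂ S z v = ∑ i, (f z).1 i * (fderiv ℂ f z v).2 i - ∑ i, z.1 i * v.2 i) ∧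
        ∀ w : ℕ → (Fin d → ℂ) × (Fin d → ℂ), w 0 = z →
          (∀ k < n, Step (g k) (w k) (w (k + 1)) ∧ ‖(w (k + 1)).1 - (w k).1‖ ≤ δ / 16) →
          f z = w n ∧ S z = ∑ k ∈ Finset.range n, act (g k) (w k) (w (k + 1)) ∧
          ∀ k < n, ‖w (k + 1) - w k‖ ≤ κ := by
  have hκ0 : 0 ≤ κ := by rw [hκ]; positivity
  induction n with
  | zero =>
    refine ⟨id, fun _ => 0, differentiableOn_id, differentiableOn_const 0, fun z hz => ⟨by simp, by simp, ?_, ?_⟩⟩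
    · intro v; simp
    · intro w hw _
      simp [hw]
  | succ n ih =>
    obtain ⟨f, S, hf, hS, H⟩ := ih (by omega)
    obtain ⟨G, hG, hGp⟩ := one_step hδ (hg n (by omega)) (hγ n (by omega)) hκ hsm
    have hnT : (n : ℝ) * κ ≤ δ / 4 := by
      refine le_trans ?_ hT
      gcongr
      omega
    have hmap : ∀ z ∈ ball x₀ (δ / 4), f z ∈ ball x₀ (δ / 2) := by
      intro z hz
      have h1 := (H z hz).1
      rw [mem_ball] at hz ⊢
      have h2 := dist_triangle (f z) z x₀
      rw [dist_eq_norm (f z) z] at h2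
      linarith
    have hGd : ∀ z ∈ ball x₀ (δ / 2), DifferentiableAt ℂ G z := fun z hz =>
      hG.differentiableAt (isOpen_ball.mem_nhds hz)
    have hex : ∀ z ∈ ball x₀ (δ / 2), _ := fun z hz =>
      step_exact (hGd z hz) ((hg n (by omega)).differentiableOn.differentiableAt
        (isOpen_ball.mem_nhds (ball_subset_ball (by linarith) (hGp z hz).1))) (hGp z hz).2.1
    set a : (Fin d → ℂ) × (Fin d → ℂ) → ℂ :=
      fun z => ∑ i, (G z).1 i * ((G z).2 i - z.2 i) - g n ((G z).1, z.2) with ha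
    have had : ∀ z ∈ ball x₀ (δ / 4), DifferentiableAt ℂ a (f z) := fun z hz =>
      (hex _ (hmap z hz)).1
    have hfd : ∀ z ∈ ball x₀ (δ / 4), DifferentiableAt ℂ f z := fun z hz =>
      hf.differentiableAt (isOpen_ball.mem_nhds hz)
    have hSd : ∀ z ∈ ball x₀ (δ / 4), DifferentiableAt ℂ S z := fun z hz =>
      hS.differentiableAt (isOpen_ball.mem_nhds hz)
    refine ⟨fun z => G (f z), fun z => S z + a (f z), hG.comp hf hmap, ?_, fun z hz => ⟨?_, ?_, ?_, ?_⟩⟩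
    · intro z hz
      exact ((hSd z hz).add ((had z hz).comp z (hfd z hz))).differentiableWithinAt
    · have h1 := (H z hz).1
      have h2 := (hGp _ (hmap z hz)).2.2.1
      have h3 := norm_add_le (G (f z) - f z) (f z - z)
      rw [sub_add_sub_cancel] at h3
      push_cast
      linarith
    · have h1 := (H z hz).2.1
      have hm := (hGp _ (hmap z hz)).1
      have hm' := ball_subset_ball (by linarith : 5 * δ / 8 ≤ δ) hm
      have h2 := (hGp _ (hmap z hz)).2.2.1
      have h4 := h3 _ hm'
      have h5 := hγ n (by omega) _ hm'
      have h6 : ‖∑ i, (G (f z)).1 i * ((G (f z)).2 i - (f z).2 i)‖ ≤ d * (3 * κ) := by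
        refine (norm_sum_le _ _).trans ?_
        refine (Finset.sum_le_card_nsmul _ _ (3 * κ) fun i _ => ?_).trans (by simp)
        rw [norm_mul]
        refine mul_le_mul ((norm_le_pi_norm (G (f z)).1 i).trans h4) ?_ (norm_nonneg _) (by norm_num)
        exact (snd_le (G (f z) - f z) i).trans h2
      have h7 : ‖a (f z)‖ ≤ d * (3 * κ) + γ := (norm_sub_le _ _).trans (add_le_add h6 h5)
      have h8 := norm_add_le (S z) (a (f z))
      push_cast
      linarith
    · intro v
      have e1 : fderiv ℂ (fun z => S z + a (f z)) z v
          = fderiv ℂ S z v + fderiv ℂ a (f z) (fderiv ℂ f z v) := by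
        have := (hSd z hz).hasFDerivAt.add ((had z hz).hasFDerivAt.comp z (hfd z hz).hasFDerivAt)
        exact congrArg (fun l => l v) this.fderiv
      have e2 : fderiv ℂ (fun z => G (f z)) z v = fderiv ℂ G (f z) (fderiv ℂ f z v) := by
        have := (hGd _ (hmap z hz)).hasFDerivAt.comp z (hfd z hz).hasFDerivAt
        exact congrArg (fun l => l v) this.fderiv
      rw [e1, e2, (H z hz).2.2.1 v, (hex _ (hmap z hz)).2]
      ring
    · intro w hw hstep
      obtain ⟨e1, e2, e3⟩ := (H z hz).2.2.2 w hw fun k hk => hstep k (by omega)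
      have hs := hstep n (by omega)
      have hfz := hmap z hz
      have e4 : w (n + 1) = G (f z) := by
        refine (hGp _ hfz).2.2.2 _ (by rw [e1]; exact hs.1) ?_
        rw [mem_ball, dist_eq_norm] at hfz ⊢
        have : ((w (n + 1)).1, (f z).2) - x₀ = ((w (n + 1)).1 - (w n).1, 0) + (f z - x₀) := by
          rw [e1]; ext i <;> simp
        rw [this]
        refine lt_of_le_of_lt (norm_add_le _ _) ?_
        have : ‖(((w (n + 1)).1 - (w n).1, 0) : (Fin d → ℂ) × (Fin d → ℂ))‖ ≤ δ / 16 := by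
          rw [Prod.norm_def]
          exact max_le hs.2 (by simp; linarith)
        linarith
      refine ⟨e4.symm, ?_, ?_⟩
      · rw [Finset.sum_range_succ, ← e2, e4, ← e1]
        rfl
      · intro k hk
        rcases Nat.lt_succ_iff_lt_or_eq.1 hk with h | rfl
        · exact e3 k h
        · rw [e4, ← e1]; exact (hGp _ hfz).2.2.1

end Nek

namespace Nek
open Metric
variable {d : ℕ}

theorem tele {w : ℕ → (Fin d → ℂ) × (Fin d → ℂ)} {κ : ℝ} {T : ℕ}
    (h : ∀ k < T, ‖w (k + 1) - w k‖ ≤ κ) (j : ℕ) (hj : j ≤ T) : ‖w j - w 0‖ ≤ j * κ := by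
  induction j with
  | zero => simp
  | succ j ih =>
    have h1 := ih (by omega)
    have h2 := h j (by omega)
    have h3 := norm_add_le (w (j + 1) - w j) (w j - w 0)
    rw [sub_add_sub_cancel] at h3
    push_cast
    linarith

theorem core {T : ℕ} {g : ℕ → (Fin d → ℂ) × (Fin d → ℂ) → ℂ}
    {Z : ℕ → ℕ → (Fin d → ℂ) × (Fin d → ℂ)} {n m : ℕ}
    {δ γ κ μ : ℝ} (hT : 1 ≤ T) (hδ : 0 < δ) (hδ1 : δ ≤ 1)
    (hZ : ∀ n, Z n T = Z (n + 1) 0)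
    (hg : ∀ k < T, AnalyticOnNhd ℂ (g k) (ball (Z n 0) δ))
    (hγ : ∀ k < T, ∀ z ∈ ball (Z n 0) δ, ‖g k z‖ ≤ γ) (hγ0 : 0 ≤ γ)
    (hκ : κ = 4 * γ / δ) (hμ : μ = T * κ)
    (hy : ‖(Z n 0).1‖ ≤ 2)
    (hstep : ∀ k, Z k 0 ∈ ball (Z n 0) (δ / 4) → ∀ j < T,
      Step (g j) (Z k j) (Z k (j + 1)) ∧ ‖(Z k (j + 1)).1 - (Z k j).1‖ ≤ δ / 16)
    (hm1 : 1 ≤ m) (hm : 200 * m * μ ≤ δ / 4) :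
    ‖En m (fun n => Z n 0) (fun n => ∑ k ∈ Finset.range T, act (g k) (Z n k) (Z n (k + 1))) (n + 1)
      - En m (fun n => Z n 0) (fun n => ∑ k ∈ Finset.range T, act (g k) (Z n k) (Z n (k + 1))) n‖
      ≤ 4 * (d + 1) * (2 / 3) ^ m ∧
    ‖En m (fun n => Z n 0) (fun n => ∑ k ∈ Finset.range T, act (g k) (Z n k) (Z n (k + 1))) n
      - ∑ k ∈ Finset.range T, g k (Z n 0)‖ ≤ 1300 * (d + 1) * μ ^ 2 / δ ∧
    ∀ j ≤ T, ‖Z n j - Z n 0‖ ≤ μ := by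
  have hκ0 : 0 ≤ κ := by rw [hκ]; positivity
  have hT1 : (1:ℝ) ≤ T := by exact_mod_cast hT
  have hm0 : (1:ℝ) ≤ m := by exact_mod_cast hm1
  have hκμ : κ ≤ μ := by rw [hμ]; nlinarith
  have hμ0 : 0 ≤ μ := hκ0.trans hκμ
  have hmμ : μ ≤ m * μ := by nlinarith
  have h3 : ∀ z ∈ ball (Z n 0) δ, ‖z.1‖ ≤ 3 := by
    intro z hz
    rw [mem_ball, dist_eq_norm] at hz
    have h1 := norm_add_le (z - Z n 0).1 (Z n 0).1
    rw [← Prod.fst_add, sub_add_cancel] at h1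
    have := norm_fst_le (z - Z n 0)
    linarith
  obtain ⟨f, S, hf, hS, H⟩ := chain hδ hg hγ hγ0 hκ (by linarith) (by linarith) h3 T le_rfl
  have hyn : Z n 0 ∈ ball (Z n 0) (δ / 4) := mem_ball_self (by linarith)
  have track : ∀ k, Z k 0 ∈ ball (Z n 0) (δ / 4) → f (Z k 0) = Z (k + 1) 0 ∧
      S (Z k 0) = ∑ j ∈ Finset.range T, act (g j) (Z k j) (Z k (j + 1)) ∧
      ∀ j < T, ‖Z k (j + 1) - Z k j‖ ≤ κ := by
    intro k hk
    rw [← hZ]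
    exact (H _ hk).2.2.2 (Z k) rfl (hstep k hk)
  have hmem : ∀ i ≤ m, ‖Z (n + i) 0 - Z n 0‖ ≤ i * μ ∧ Z (n + i) 0 ∈ ball (Z n 0) (δ / 4) := by
    intro i hi
    have hfin : ∀ a : ℕ, a ≤ m → ‖Z (n + a) 0 - Z n 0‖ ≤ a * μ → Z (n + a) 0 ∈ ball (Z n 0) (δ / 4) := by
      intro a ha h
      rw [mem_ball, dist_eq_norm]
      have : (a : ℝ) * μ ≤ m * μ := by gcongr
      linarith
    induction i with
    | zero => exact ⟨by simp, hyn⟩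
    | succ i ih =>
      obtain ⟨h1, h2⟩ := ih (by omega)
      have h4 := (H _ h2).1
      rw [(track _ h2).1, ← hμ] at h4
      have h5 := norm_add_le (Z (n + i + 1) 0 - Z (n + i) 0) (Z (n + i) 0 - Z n 0)
      rw [sub_add_sub_cancel] at h5
      have h6 : ‖Z (n + (i + 1)) 0 - Z n 0‖ ≤ (i + 1 : ℕ) * μ := by
        rw [← add_assoc]; push_cast; linarith
      exact ⟨h6, hfin _ hi h6⟩
  have hfy : ∀ k, n ≤ k → k ≤ n + m → f (Z k 0) = Z (k + 1) 0 := by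
    intro k h1 h2
    obtain ⟨i, rfl⟩ := Nat.exists_eq_add_of_le h1
    exact (track _ (hmem i (by omega)).2).1
  have hSy : ∀ k, n ≤ k → k ≤ n + m →
      S (Z k 0) = ∑ j ∈ Finset.range T, act (g j) (Z k j) (Z k (j + 1)) := by
    intro k h1 h2
    obtain ⟨i, rfl⟩ := Nat.exists_eq_add_of_le h1
    exact (track _ (hmem i (by omega)).2).2.1
  have hγκ : T * γ ≤ μ := by
    have : γ ≤ κ := by
      rw [hκ, le_div_iff₀ hδ]; nlinarith
    rw [hμ]; gcongr
  have hMS : ∀ x ∈ ball (Z n 0) (δ / 4), ‖S x‖ ≤ (3 * d + 1) * μ := by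
    intro x hx
    refine ((H x hx).2.1).trans ?_
    rw [hμ] at hγκ ⊢
    linarith
  have hμ' : ∀ x ∈ ball (Z n 0) (δ / 4), ‖f x - x‖ ≤ μ := by
    intro x hx
    rw [hμ]; exact (H x hx).1
  have hd0 : (0:ℝ) ≤ d := Nat.cast_nonneg d
  have hjμ : ∀ j ≤ T, ‖Z n j - Z n 0‖ ≤ μ := by
    intro j hj
    refine (tele (track n hyn).2.2 j hj).trans ?_
    rw [hμ]; gcongr
  refine ⟨?_, ?_, hjμ⟩
  · have h := energy_drift (y := fun n => Z n 0) (MJ := 3)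
      (Sq := fun n => ∑ k ∈ Finset.range T, act (g k) (Z n k) (Z n (k + 1)))
      (by linarith : 0 < δ / 4) hf hμ' hS hMS
      (h3 _ (by
        rw [mem_ball, dist_eq_norm]
        have := hμ' _ hyn
        linarith)) (H _ hyn).2.2.1 hfy hSy hm1 hm
    refine h.trans ?_
    refine mul_le_mul_of_nonneg_right ?_ (by positivity)
    nlinarith
  · have h := energy_lead (y := fun n => Z n 0) (MJ := 3)
      (Sq := fun n => ∑ k ∈ Finset.range T, act (g k) (Z n k) (Z n (k + 1)))
      (by linarith : 0 < δ / 4) hf hμ' hS hMS (by linarith) hfy hSy hm1 hm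
    have key : ‖(∑ i, (Z n 0).1 i * ((Z (n + 1) 0).2 i - (Z n 0).2 i)
        - ∑ k ∈ Finset.range T, act (g k) (Z n k) (Z n (k + 1))) - ∑ k ∈ Finset.range T, g k (Z n 0)‖
        ≤ T * (d * (μ * κ) + κ * μ) := by
      have e : (∑ i, (Z n 0).1 i * ((Z (n + 1) 0).2 i - (Z n 0).2 i)
        - ∑ k ∈ Finset.range T, act (g k) (Z n k) (Z n (k + 1))) - ∑ k ∈ Finset.range T, g k (Z n 0)
        = ∑ k ∈ Finset.range T, (∑ i, ((Z n 0).1 i - (Z n (k + 1)).1 i) * ((Z n (k + 1)).2 i - (Z n k).2 i)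
          + (g k ((Z n (k + 1)).1, (Z n k).2) - g k (Z n 0))) := by
        have e1 : ∀ i, (Z (n + 1) 0).2 i - (Z n 0).2 i
            = ∑ k ∈ Finset.range T, ((Z n (k + 1)).2 i - (Z n k).2 i) := by
          intro i
          rw [Finset.sum_range_sub (fun k => (Z n k).2 i), hZ]
        simp only [e1, Finset.mul_sum]
        rw [Finset.sum_comm, ← Finset.sum_sub_distrib, ← Finset.sum_sub_distrib]
        refine Finset.sum_congr rfl fun k _ => ?_
        simp only [act, sub_mul, Finset.sum_sub_distrib]
        ring
      rw [e]
      refine (norm_sum_le _ _).trans ?_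
      refine (Finset.sum_le_card_nsmul _ _ (d * (μ * κ) + κ * μ) fun k hk => ?_).trans (by simp [mul_add])
      have hkT := Finset.mem_range.1 hk
      have a1 := hjμ (k + 1) (by omega)
      have a2 := hjμ k (by omega)
      have a3 := (track n hyn).2.2 k hkT
      refine (norm_add_le _ _).trans (add_le_add ?_ ?_)
      · refine (norm_sum_le _ _).trans ?_
        refine (Finset.sum_le_card_nsmul _ _ (μ * κ) fun i _ => ?_).trans (by simp)
        rw [norm_mul]
        refine mul_le_mul ?_ ((snd_le (Z n (k + 1) - Z n k) i).trans a3) (norm_nonneg _) hμ0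
        rw [norm_sub_rev]
        exact (fst_le (Z n (k + 1) - Z n 0) i).trans a1
      · have hp : ‖((Z n (k + 1)).1, (Z n k).2) - Z n 0‖ ≤ μ := by
          rw [Prod.norm_def]
          exact max_le ((norm_fst_le (Z n (k + 1) - Z n 0)).trans a1)
            ((norm_snd_le (Z n k - Z n 0)).trans a2)
        have h := lip_ball (a := δ / 4) (x := Z n 0) (y := ((Z n (k + 1)).1, (Z n k).2)) (by linarith)
          (hg k hkT).differentiableOn (hγ k hkT) (mem_ball_self (by linarith)) (by
            rw [mem_ball, dist_eq_norm]; linarith)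
        have e2 : γ / (δ / 4) = κ := by rw [hκ]; field_simp
        rw [e2] at h
        exact h.trans (by gcongr)
    have h' := norm_add_le _ _ |>.trans (add_le_add h key)
    rw [sub_add_sub_cancel] at h'
    refine h'.trans ?_
    have e3 : (T:ℝ) * (d * (μ * κ) + κ * μ) = (d + 1) * μ ^ 2 := by
      rw [hμ]; ring
    rw [e3]
    have e4 : ((d:ℝ) + 1) * μ ^ 2 ≤ (d + 1) * μ ^ 2 / δ := by
      rw [le_div_iff₀ hδ]
      have : 0 ≤ ((d:ℝ) + 1) * μ ^ 2 := by positivity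
      nlinarith
    have e5 : 96 * d * 3 * μ ^ 2 / (δ / 4) + 8 * ((3 * d + 1) * μ) * μ / (δ / 4)
        + (d + 1) * μ ^ 2 / δ = (1249 * d + 33) * μ ^ 2 / δ := by
      field_simp; ring
    have e6 : (1249 * d + 33) * μ ^ 2 / δ ≤ 1300 * (d + 1) * μ ^ 2 / δ := by
      gcongr
      linarith
    linarith

end Nek

namespace Nek
open Metric
variable {d : ℕ}

theorem confine {T : ℕ} {g : ℕ → (Fin d → ℂ) × (Fin d → ℂ) → ℂ}
    {Z : ℕ → ℕ → (Fin d → ℂ) × (Fin d → ℂ)} {m N : ℕ}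
    {δ γ κ μ e L : ℝ} (hT : 1 ≤ T) (hδ : 0 < δ) (hδ1 : δ ≤ 1)
    (hZ : ∀ n, Z n T = Z (n + 1) 0)
    (hg : ∀ n, ‖(Z n 0).1‖ ≤ 2 → ∀ k < T, AnalyticOnNhd ℂ (g k) (ball (Z n 0) δ))
    (hγ : ∀ n, ‖(Z n 0).1‖ ≤ 2 → ∀ k < T, ∀ z ∈ ball (Z n 0) δ, ‖g k z‖ ≤ γ) (hγ0 : 0 ≤ γ)
    (hκ : κ = 4 * γ / δ) (hμ : μ = T * κ)
    (hstep : ∀ n, ‖(Z n 0).1‖ ≤ 9 / 4 → ∀ j < T,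
      Step (g j) (Z n j) (Z n (j + 1)) ∧ ‖(Z n (j + 1)).1 - (Z n j).1‖ ≤ δ / 16)
    (hm1 : 1 ≤ m) (hm : 200 * m * μ ≤ δ / 4)
    (h0 : (Z 0 0).1 = 0) (he : (∑ k ∈ Finset.range T, g k (Z 0 0)).re ≤ e)
    (hlow : ∀ n, 1 < ‖(Z n 0).1‖ → ‖(Z n 0).1‖ ≤ 2 → L ≤ (∑ k ∈ Finset.range T, g k (Z n 0)).re)
    (hN : e + 2 * (1300 * (d + 1) * μ ^ 2 / δ) + N * (4 * (d + 1) * (2 / 3) ^ m) < L) :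
    ∀ n ≤ N, ∀ j ≤ T, ‖(Z n j).1‖ ≤ 2 := by
  have hκ0 : 0 ≤ κ := by rw [hκ]; positivity
  have hμ0 : 0 ≤ μ := by rw [hμ]; positivity
  have hm0 : (1:ℝ) ≤ m := by exact_mod_cast hm1
  have hmμ : μ ≤ m * μ := by nlinarith
  have hcore : ∀ n, ‖(Z n 0).1‖ ≤ 2 → _ := fun n hn =>
    core (m := m) hT hδ hδ1 hZ (hg n hn) (hγ n hn) hγ0 hκ hμ hn (fun k hk => hstep k (by
      rw [mem_ball, dist_eq_norm] at hk
      have h1 := norm_add_le (Z k 0 - Z n 0).1 (Z n 0).1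
      rw [← Prod.fst_add, sub_add_cancel] at h1
      have := norm_fst_le (Z k 0 - Z n 0)
      linarith)) hm1 hm
  set En' := En m (fun n => Z n 0) (fun n => ∑ k ∈ Finset.range T, act (g k) (Z n k) (Z n (k + 1)))
    with hEn
  set D : ℝ := 4 * (d + 1) * (2 / 3) ^ m with hD
  set Er : ℝ := 1300 * (d + 1) * μ ^ 2 / δ with hEr
  have hD0 : 0 ≤ D := by positivity
  have hnext : ∀ n, ‖(Z n 0).1‖ ≤ 1 → ∀ j ≤ T, ‖(Z n j).1‖ ≤ 2 := by
    intro n hn j hj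
    have h1 := (hcore n (by linarith)).2.2 j hj
    have h2 := norm_add_le (Z n j - Z n 0).1 (Z n 0).1
    rw [← Prod.fst_add, sub_add_cancel] at h2
    have := norm_fst_le (Z n j - Z n 0)
    linarith
  have main : ∀ n ≤ N, ‖(Z n 0).1‖ ≤ 1 ∧ ‖En' n - En' 0‖ ≤ n * D := by
    intro n hn
    induction n with
    | zero => simp [h0]
    | succ n ih =>
      obtain ⟨h1, h2⟩ := ih (by omega)
      have h3 := (hcore n (by linarith)).1
      have h4 : ‖(Z (n + 1) 0).1‖ ≤ 2 := by
        rw [← hZ]; exact hnext n h1 T le_rfl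
      have h5 : ‖En' (n + 1) - En' 0‖ ≤ (n + 1 : ℕ) * D := by
        have := norm_add_le (En' (n + 1) - En' n) (En' n - En' 0)
        rw [sub_add_sub_cancel] at this
        push_cast
        linarith
      refine ⟨?_, h5⟩
      by_contra hcon
      push Not at hcon
      have h6 := hlow _ hcon h4
      have h7 := (hcore (n + 1) h4).2.1
      have h8 := (hcore 0 (by rw [h0]; simp)).2.1
      have r5 := (Complex.abs_re_le_norm _).trans h5
      have r7 := (Complex.abs_re_le_norm _).trans h7
      have r8 := (Complex.abs_re_le_norm _).trans h8
      rw [Complex.sub_re, abs_le] at r5 r7 r8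
      have hNn : ((n + 1 : ℕ) : ℝ) * D ≤ N * D := by gcongr
      linarith [r5.1, r5.2, r7.1, r7.2, r8.1, r8.2]
  intro n hn j hj
  exact hnext n (main n hn).1 j hj

end Nek

namespace Nek
open Metric
variable {d : ℕ}

/-- Local complexification of vectors. -/
def cxv (v : Fin d → ℝ) : Fin d → ℂ := fun i => (v i : ℂ)

theorem cxv_sub (v w : Fin d → ℝ) : cxv (v - w) = cxv v - cxv w := by
  ext i; simp [cxv]

theorem cxv_norm (v : Fin d → ℝ) : ‖cxv v‖ = ‖v‖ := by
  rw [Pi.norm_def, Pi.norm_def]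
  congr 2
  ext i
  simp [cxv]

/-- complexified power series -/
noncomputable def cser (p : FormalMultilinearSeries ℝ (Fin d → ℝ) ℝ) :
    FormalMultilinearSeries ℂ (Fin d → ℂ) ℂ := fun n =>
  ∑ i : Fin n → Fin d, ((p n (fun j => Pi.single (i j) 1) : ℝ) : ℂ) •
    (ContinuousMultilinearMap.mkPiAlgebraFin ℂ n ℂ).compContinuousLinearMap
      (fun j => (ContinuousLinearMap.proj (i j) : (Fin d → ℂ) →L[ℂ] ℂ))

theorem cser_apply (p : FormalMultilinearSeries ℝ (Fin d → ℝ) ℝ) (n : ℕ) (z : Fin n → Fin d → ℂ) :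
    cser p n z = ∑ i : Fin n → Fin d, ((p n (fun j => Pi.single (i j) 1) : ℝ) : ℂ) *
      ∏ j, z j (i j) := by
  simp [cser, List.prod_ofFn]

theorem cser_real (p : FormalMultilinearSeries ℝ (Fin d → ℝ) ℝ) (n : ℕ) (v : Fin d → ℝ) :
    cser p n (fun _ => cxv v) = ((p n (fun _ => v) : ℝ) : ℂ) := by
  rw [cser_apply]
  have e : v = ∑ i, v i • (Pi.single i 1 : Fin d → ℝ) := by
    ext k; simp [Finset.sum_apply, Pi.single_apply]
  conv_rhs => rw [e]
  rw [ContinuousMultilinearMap.map_sum]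
  push_cast
  refine Finset.sum_congr rfl fun i _ => ?_
  rw [ContinuousMultilinearMap.map_smul_univ]
  simp [cxv, mul_comm]

theorem cser_norm (p : FormalMultilinearSeries ℝ (Fin d → ℝ) ℝ) (n : ℕ) :
    ‖cser p n‖ ≤ (d : ℝ) ^ n * ‖p n‖ := by
  refine ContinuousMultilinearMap.opNorm_le_bound (by positivity) fun z => ?_
  rw [cser_apply]
  refine (norm_sum_le _ _).trans ?_
  refine (Finset.sum_le_card_nsmul _ _ (‖p n‖ * ∏ j, ‖z j‖) fun i _ => ?_).trans ?_
  · rw [norm_mul, norm_prod]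
    refine mul_le_mul ?_ ?_ (Finset.prod_nonneg fun _ _ => norm_nonneg _) (norm_nonneg _)
    · rw [Complex.norm_real]
      refine ((p n).le_opNorm _).trans ?_
      simp [Pi.norm_single]
    · exact Finset.prod_le_prod (fun _ _ => norm_nonneg _) fun j _ => norm_le_pi_norm _ _
  · simp [mul_assoc]

theorem cser_radius (p : FormalMultilinearSeries ℝ (Fin d → ℝ) ℝ) (hp : 0 < p.radius) :
    0 < (cser p).radius := by
  obtain ⟨r, hr0, hr⟩ := ENNReal.lt_iff_exists_nnreal_btwn.1 hp
  obtain ⟨C, hC, hb⟩ := p.norm_mul_pow_le_of_lt_radius hr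
  have hr0' : 0 < r := by exact_mod_cast hr0
  have : ((r / (d + 1) : NNReal) : ENNReal) ≤ (cser p).radius := by
    refine (cser p).le_radius_of_bound C fun n => ?_
    have h1 := cser_norm p n
    refine le_trans ?_ (hb n)
    push_cast
    rw [div_pow]
    calc ‖cser p n‖ * ((r:ℝ) ^ n / ((d:ℝ) + 1) ^ n)
        ≤ ((d : ℝ) ^ n * ‖p n‖) * ((r:ℝ) ^ n / ((d:ℝ) + 1) ^ n) := by gcongr
      _ = ((d:ℝ) ^ n / ((d:ℝ) + 1) ^ n) * (‖p n‖ * r ^ n) := by ring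
      _ ≤ 1 * (‖p n‖ * r ^ n) := by
          refine mul_le_mul_of_nonneg_right ?_ (by positivity)
          refine div_le_one_of_le₀ ?_ (by positivity)
          exact pow_le_pow_left₀ (by positivity) (by linarith) n
      _ = _ := one_mul _
  refine lt_of_lt_of_le ?_ this
  have : 0 < r / (d + 1) := by positivity
  exact_mod_cast this

theorem ext_local {h : (Fin d → ℝ) → ℝ} {x : Fin d → ℝ} (hx : AnalyticAt ℝ h x) :
    ∃ δ > 0, ∃ M : ℝ, ∃ H : (Fin d → ℂ) → ℂ, AnalyticOnNhd ℂ H (ball (cxv x) δ) ∧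
      (∀ z ∈ ball (cxv x) δ, ‖H z‖ ≤ M) ∧ ∀ I ∈ ball x δ, H (cxv I) = (h I : ℂ) := by
  obtain ⟨p, r, hp⟩ := hx
  have hrad := cser_radius p (lt_of_lt_of_le hp.r_pos hp.r_le)
  have hq := (cser p).hasFPowerSeriesOnBall hrad
  set H : (Fin d → ℂ) → ℂ := fun z => (cser p).sum (z - cxv x) with hH
  have hHp : HasFPowerSeriesOnBall H (cser p) (cxv x) (cser p).radius := by
    have := hq.comp_sub (cxv x)
    simpa using this
  have hc : ContinuousAt H (cxv x) := hHp.hasFPowerSeriesAt.continuousAt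
  obtain ⟨δ1, hδ1, hM⟩ := Metric.continuousAt_iff.1 hc 1 one_pos
  obtain ⟨δ2, hδ2, h2⟩ := ENNReal.lt_iff_exists_nnreal_btwn.1 hrad
  obtain ⟨δ3, hδ3, h3⟩ := ENNReal.lt_iff_exists_nnreal_btwn.1 hp.r_pos
  have hδ2' : (0:ℝ) < δ2 := by exact_mod_cast hδ2
  have hδ3' : (0:ℝ) < δ3 := by exact_mod_cast hδ3
  have hin : ∀ z : Fin d → ℂ, dist z (cxv x) < δ2 → z ∈ Metric.eball (cxv x) (cser p).radius := by
    intro z hz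
    rw [Metric.mem_eball]
    refine lt_trans ?_ h2
    rw [edist_dist]
    rw [ENNReal.ofReal_lt_iff_lt_toReal dist_nonneg (by simp)]
    simpa using hz
  refine ⟨min δ1 (min δ2 δ3), lt_min hδ1 (lt_min hδ2' hδ3'), ‖H (cxv x)‖ + 1, H, ?_, ?_, ?_⟩
  · intro z hz
    rw [mem_ball, lt_min_iff, lt_min_iff] at hz
    exact hHp.analyticOnNhd z (hin z hz.2.1)
  · intro z hz
    rw [mem_ball, lt_min_iff] at hz
    have h4 := hM hz.1
    rw [dist_eq_norm] at h4
    have := norm_add_le (H z - H (cxv x)) (H (cxv x))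
    rw [sub_add_cancel] at this
    linarith
  · intro I hI
    rw [mem_ball, lt_min_iff, lt_min_iff] at hI
    have hIr : I ∈ Metric.eball x r := by
      rw [Metric.mem_eball]
      refine lt_trans ?_ h3
      rw [edist_dist, ENNReal.ofReal_lt_iff_lt_toReal dist_nonneg (by simp)]
      simpa using hI.2.2
    have hIc : cxv I ∈ Metric.eball (cxv x) (cser p).radius := hin _ (by
      rw [dist_eq_norm, ← cxv_sub, cxv_norm, ← dist_eq_norm]; exact hI.2.1)
    have s1 := hp.hasSum_sub hIr
    have s2 := hHp.hasSum_sub hIc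
    rw [← cxv_sub] at s2
    simp only [cser_real] at s2
    have s3 := Complex.hasSum_ofReal.2 s1
    exact s2.unique s3

theorem ext_unif {h : (Fin d → ℝ) → ℝ} {K : Set (Fin d → ℝ)} (hK : IsCompact K)
    (hx : ∀ x ∈ K, AnalyticAt ℝ h x) :
    ∃ δ > 0, ∃ M : ℝ, ∀ x ∈ K, ∃ H : (Fin d → ℂ) → ℂ, AnalyticOnNhd ℂ H (ball (cxv x) δ) ∧
      (∀ z ∈ ball (cxv x) δ, ‖H z‖ ≤ M) ∧ ∀ I ∈ ball x δ, H (cxv I) = (h I : ℂ) := by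
  refine hK.induction_on (p := fun K => ∃ δ > 0, ∃ M : ℝ, ∀ x ∈ K, ∃ H : (Fin d → ℂ) → ℂ,
      AnalyticOnNhd ℂ H (ball (cxv x) δ) ∧
      (∀ z ∈ ball (cxv x) δ, ‖H z‖ ≤ M) ∧ ∀ I ∈ ball x δ, H (cxv I) = (h I : ℂ)) ?_ ?_ ?_ ?_
  · exact ⟨1, one_pos, 0, by simp⟩
  · rintro s t hst ⟨δ, hδ, M, H⟩
    exact ⟨δ, hδ, M, fun x hx => H x (hst hx)⟩
  · rintro s t ⟨δ, hδ, M, h1⟩ ⟨δ', hδ', M', h2⟩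
    refine ⟨min δ δ', lt_min hδ hδ', max M M', ?_⟩
    rintro x (hx | hx)
    · obtain ⟨H, a, b, c⟩ := h1 x hx
      have hb := ball_subset_ball (x := cxv x) (min_le_left δ δ')
      exact ⟨H, a.mono hb, fun z hz => (b z (hb hz)).trans (le_max_left _ _),
        fun I hI => c I (ball_subset_ball (min_le_left δ δ') hI)⟩
    · obtain ⟨H, a, b, c⟩ := h2 x hx
      have hb := ball_subset_ball (x := cxv x) (min_le_right δ δ')
      exact ⟨H, a.mono hb, fun z hz => (b z (hb hz)).trans (le_max_right _ _),
        fun I hI => c I (ball_subset_ball (min_le_right δ δ') hI)⟩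
  · intro x hxK
    obtain ⟨δ, hδ, M, H, a, b, c⟩ := ext_local (hx x hxK)
    refine ⟨ball x (δ / 2), mem_nhdsWithin_of_mem_nhds (ball_mem_nhds x (by linarith)), δ / 2,
      by linarith, M, fun y hy => ⟨H, ?_, ?_, ?_⟩⟩
    all_goals
      have hy' : dist y x < δ / 2 := hy
      have hyc : dist (cxv y) (cxv x) < δ / 2 := by
        rw [dist_eq_norm, ← cxv_sub, cxv_norm, ← dist_eq_norm]; exact hy'
    · exact a.mono (ball_subset_ball' (by linarith))
    · exact fun z hz => b z (ball_subset_ball' (by linarith) hz)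
    · exact fun I hI => c I (ball_subset_ball' (by linarith) hI)

/-- derivative of the extension at real points -/
theorem ext_deriv {h : (Fin d → ℝ) → ℝ} {H : (Fin d → ℂ) → ℂ} {x I om : Fin d → ℝ} {δ : ℝ}
    (hH : AnalyticOnNhd ℂ H (ball (cxv x) δ)) (he : ∀ I ∈ ball x δ, H (cxv I) = (h I : ℂ))
    (hI : I ∈ ball x δ)
    (hom : HasFDerivAt h (∑ i, om i • (ContinuousLinearMap.proj i : (Fin d → ℝ) →L[ℝ] ℝ)) I)
    (i : Fin d) : fderiv ℂ H (cxv I) (Pi.single i 1) = (om i : ℂ) := by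
  have hIc : cxv I ∈ ball (cxv x) δ := by
    rw [mem_ball, dist_eq_norm, ← cxv_sub, cxv_norm, ← dist_eq_norm]; exact hI
  have hd := (hH _ hIc).differentiableAt.hasFDerivAt
  have l1 : HasDerivAt (fun t : ℝ => I + t • (Pi.single i 1 : Fin d → ℝ)) (Pi.single i 1) 0 := by
    simpa using ((hasDerivAt_id (0:ℝ)).smul_const (Pi.single i 1 : Fin d → ℝ)).const_add I
  have l2 : HasDerivAt (fun t : ℝ => cxv I + (t:ℂ) • (Pi.single i 1 : Fin d → ℂ)) (Pi.single i 1) 0 := by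
    have := ((Complex.ofRealCLM.hasDerivAt (x := (0:ℝ))).smul_const (Pi.single i 1 : Fin d → ℂ)).const_add (cxv I)
    simpa using this
  have e1 : ∀ t : ℝ, cxv I + (t:ℂ) • (Pi.single i 1 : Fin d → ℂ) = cxv (I + t • (Pi.single i 1 : Fin d → ℝ)) := by
    intro t; ext k; by_cases hk : k = i <;> simp [cxv, Pi.single_apply, hk]
  have d1 : HasDerivAt (fun t : ℝ => h (I + t • (Pi.single i 1 : Fin d → ℝ))) (om i) 0 := by
    have h1 : HasFDerivAt h (∑ i, om i • (ContinuousLinearMap.proj i : (Fin d → ℝ) →L[ℝ] ℝ))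
      (I + (0:ℝ) • (Pi.single i 1 : Fin d → ℝ)) := by simpa using hom
    have := h1.comp_hasDerivAt (0:ℝ) l1
    have e : (∑ i, om i • (ContinuousLinearMap.proj i : (Fin d → ℝ) →L[ℝ] ℝ)) (Pi.single i 1) = om i := by
      simp [Pi.single_apply]
    rw [e] at this
    exact this
  have d2 : HasDerivAt (fun t : ℝ => H (cxv I + (t:ℂ) • (Pi.single i 1 : Fin d → ℂ)))
      (fderiv ℂ H (cxv I) (Pi.single i 1)) 0 := by
    have h1 : HasFDerivAt H ((fderiv ℂ H (cxv I)).restrictScalars ℝ)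
      (cxv I + ((0:ℝ):ℂ) • (Pi.single i 1 : Fin d → ℂ)) := by simpa using hd.restrictScalars ℝ
    exact h1.comp_hasDerivAt (0:ℝ) l2
  have d3 := d1.ofReal_comp
  refine d2.unique (d3.congr_of_eventuallyEq ?_)
  have hev : ∀ᶠ t in nhds (0:ℝ), I + t • (Pi.single i 1 : Fin d → ℝ) ∈ ball x δ := by
    refine l1.continuousAt.eventually (isOpen_ball.mem_nhds ?_)
    simpa using hI
  filter_upwards [hev] with t ht
  rw [e1, he _ ht]

/-- quadratic remainder -/
theorem ext_quad {E : Type*} [NormedAddCommGroup E] [NormedSpace ℂ E] {H : E → ℂ} {c z : E} {δ M : ℝ}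
    (hδ : 0 < δ) (hH : AnalyticOnNhd ℂ H (ball c δ)) (hM : ∀ z ∈ ball c δ, ‖H z‖ ≤ M)
    (hz : ‖z - c‖ < δ / 4) :
    ‖H z - H c - fderiv ℂ H c (z - c)‖ ≤ 8 * M / δ ^ 2 * ‖z - c‖ ^ 2 := by
  have hM0 : 0 ≤ M := (norm_nonneg _).trans (hM c (mem_ball_self hδ))
  have h1 : ∀ w ∈ ball c (δ / 2), ‖fderiv ℂ H w‖ ≤ 2 * M / δ := by
    intro w hw
    have := cauchy_fderiv_ball (a := δ / 2) (x := w) (by linarith) hH.differentiableOn hM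
      (by rwa [show δ - δ / 2 = δ / 2 by ring])
    refine this.trans (le_of_eq ?_)
    field_simp
  have h2 : ∀ w ∈ ball c (δ / 4), ‖fderiv ℂ H w - fderiv ℂ H c‖ ≤ 8 * M / δ ^ 2 * ‖w - c‖ := by
    intro w hw
    have := lip_ball (g := fderiv ℂ H) (a := δ / 4) (x := c) (y := w) (x₀ := c) (R := δ / 2) (by linarith)
      (fun w hw => (hH.fderiv.differentiableOn.differentiableAt (isOpen_ball.mem_nhds
        (ball_subset_ball (by linarith) hw))).differentiableWithinAt) h1
        (mem_ball_self (by linarith)) (by rwa [show δ / 2 - δ / 4 = δ / 4 by ring])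
    refine this.trans (le_of_eq ?_)
    field_simp
    ring
  have hsub : closedBall c ‖z - c‖ ⊆ ball c (δ / 4) := closedBall_subset_ball hz
  have h3 := (convex_closedBall c ‖z - c‖).norm_image_sub_le_of_norm_fderiv_le' (𝕜 := ℂ)
    (f := H) (φ := fderiv ℂ H c) (C := 8 * M / δ ^ 2 * ‖z - c‖) (x := c) (y := z)
    (fun w hw => (hH w (ball_subset_ball (by linarith) (hsub hw))).differentiableAt)
    (fun w hw => (h2 w (hsub hw)).trans (by
      rw [mem_closedBall, dist_eq_norm] at hw
      exact mul_le_mul_of_nonneg_left hw (by positivity)))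
    (mem_closedBall_self (norm_nonneg _)) (by rw [mem_closedBall, dist_eq_norm])
  refine h3.trans (le_of_eq ?_)
  ring

end Nek

namespace Nek
open Metric
variable {d : ℕ}

/-- Simultaneous Dirichlet approximation. -/
theorem dirichlet (om : Fin d → ℝ) (N : ℕ) (hN : 1 ≤ N) :
    ∃ T : ℕ, 1 ≤ T ∧ T ≤ N ^ d ∧ ∃ p : Fin d → ℤ, ∀ i, |(T : ℝ) * om i - p i| ≤ 1 / N := by
  have hN0 : (0:ℝ) < N := by exact_mod_cast hN
  have hlt : ∀ x : ℝ, ⌊(N:ℝ) * Int.fract x⌋₊ < N := by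
    intro x
    rw [Nat.floor_lt (mul_nonneg hN0.le (Int.fract_nonneg x))]
    have := Int.fract_lt_one x
    nlinarith
  let F : ℕ → (Fin d → Fin N) := fun t i => ⟨⌊(N:ℝ) * Int.fract ((t:ℝ) * om i)⌋₊, hlt _⟩
  have hcard : (Finset.univ : Finset (Fin d → Fin N)).card < (Finset.range (N ^ d + 1)).card := by
    simp
  obtain ⟨a, ha, b, hb, hab, hF⟩ := Finset.exists_ne_map_eq_of_card_lt_of_maps_to hcard
    (f := F) (fun _ _ => by simp)
  have key : ∀ a b : ℕ, a < b → b ≤ N ^ d → F a = F b → ∃ T : ℕ, 1 ≤ T ∧ T ≤ N ^ d ∧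
      ∃ p : Fin d → ℤ, ∀ i, |(T : ℝ) * om i - p i| ≤ 1 / N := by
    intro a b hab hb hF
    refine ⟨b - a, by omega, by omega, fun i => ⌊(b:ℝ) * om i⌋ - ⌊(a:ℝ) * om i⌋, fun i => ?_⟩
    have h1 : ⌊(N:ℝ) * Int.fract ((a:ℝ) * om i)⌋₊ = ⌊(N:ℝ) * Int.fract ((b:ℝ) * om i)⌋₊ := by
      have := congrFun hF i
      simpa [F] using this
    have a1 := Nat.floor_le (mul_nonneg hN0.le (Int.fract_nonneg ((a:ℝ) * om i)))
    have a2 := Nat.lt_floor_add_one ((N:ℝ) * Int.fract ((a:ℝ) * om i))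
    have b1 := Nat.floor_le (mul_nonneg hN0.le (Int.fract_nonneg ((b:ℝ) * om i)))
    have b2 := Nat.lt_floor_add_one ((N:ℝ) * Int.fract ((b:ℝ) * om i))
    rw [h1] at a1 a2
    rw [le_div_iff₀ hN0, Nat.cast_sub hab.le]
    have e : ((b:ℝ) - a) * om i - ((⌊(b:ℝ) * om i⌋ - ⌊(a:ℝ) * om i⌋ : ℤ) : ℝ)
        = Int.fract ((b:ℝ) * om i) - Int.fract ((a:ℝ) * om i) := by
      unfold Int.fract; push_cast; ring
    rw [e, ← abs_of_pos hN0, ← abs_mul, abs_le]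
    constructor <;> nlinarith
  rw [Finset.mem_range] at ha hb
  rcases lt_or_gt_of_ne hab with h | h
  · exact key a b h (by omega) hF
  · exact key b a h (by omega) hF.symm

/-- strong convexity -/
theorem strong_conv {h : (Fin d → ℝ) → ℝ} {om : (Fin d → ℝ) → Fin d → ℝ} {s : Set (Fin d → ℝ)}
    {ν : ℝ} (hd : 1 ≤ d) (hν : 0 < ν) (hs : Convex ℝ s)
    (hω : ∀ I ∈ s, HasFDerivAt h
      (∑ i, om I i • (ContinuousLinearMap.proj i : (Fin d → ℝ) →L[ℝ] ℝ)) I)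
    (hconvex : ∀ I ∈ s, ∀ v : Fin d → ℝ, ν * ∑ i, v i ^ 2 ≤ ∑ i, fderiv ℝ om I v i * v i)
    {x y : Fin d → ℝ} (hx : x ∈ s) (hy : y ∈ s) :
    ν / 2 * ∑ i, (y i - x i) ^ 2 ≤ h y - h x - ∑ i, om x i * (y i - x i) := by
  have hdiff : ∀ I ∈ s, DifferentiableAt ℝ om I := by
    intro I hI
    by_contra hcon
    have := hconvex I hI (fun _ => 1)
    rw [fderiv_zero_of_not_differentiableAt hcon] at this
    simp at this
    have hd' : (1:ℝ) ≤ d := by exact_mod_cast hd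
    nlinarith
  set v : Fin d → ℝ := y - x with hv
  set Q : ℝ := ∑ i, v i ^ 2 with hQ
  have hseg : ∀ t ∈ Set.Icc (0:ℝ) 1, x + t • v ∈ s := fun t ht =>
    hs.add_smul_sub_mem hx hy ht
  have hl : ∀ t : ℝ, HasDerivAt (fun t : ℝ => x + t • v) v t := by
    intro t
    simpa using ((hasDerivAt_id t).smul_const v).const_add x
  have hu : ∀ t ∈ Set.Icc (0:ℝ) 1, HasDerivAt (fun t : ℝ => h (x + t • v)) (∑ i, om (x + t • v) i * v i) t := by
    intro t ht
    have h1 := (hω _ (hseg t ht)).comp_hasDerivAt t (hl t)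
    have e : (∑ i, om (x + t • v) i • (ContinuousLinearMap.proj i : (Fin d → ℝ) →L[ℝ] ℝ)) v
      = ∑ i, om (x + t • v) i * v i := by simp
    rw [e] at h1
    exact h1
  have hu' : ∀ t ∈ Set.Icc (0:ℝ) 1, HasDerivAt (fun t : ℝ => ∑ i, om (x + t • v) i * v i)
      (∑ i, fderiv ℝ om (x + t • v) v i * v i) t := by
    intro t ht
    have h1 : HasDerivAt (fun t : ℝ => om (x + t • v)) (fderiv ℝ om (x + t • v) v) t :=
      (hdiff _ (hseg t ht)).hasFDerivAt.comp_hasDerivAt t (hl t)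
    rw [hasDerivAt_pi] at h1
    exact HasDerivAt.fun_sum fun i _ => (h1 i).mul_const (v i)
  have mono1 : ∀ t ∈ Set.Icc (0:ℝ) 1, ∑ i, om x i * v i + ν * Q * t ≤ ∑ i, om (x + t • v) i * v i := by
    have hm : MonotoneOn (fun t : ℝ => ∑ i, om (x + t • v) i * v i - ν * Q * t) (Set.Icc 0 1) := by
      have hder : ∀ t ∈ Set.Icc (0:ℝ) 1, HasDerivAt (fun t : ℝ => ∑ i, om (x + t • v) i * v i - ν * Q * t)
        (∑ i, fderiv ℝ om (x + t • v) v i * v i - ν * Q) t := by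
        intro t ht
        have := (hu' t ht).sub ((hasDerivAt_id t).const_mul (ν * Q))
        rw [mul_one] at this
        exact this
      refine monotoneOn_of_deriv_nonneg (convex_Icc 0 1) (fun t ht => (hder t ht).continuousAt.continuousWithinAt)
        (fun t ht => (hder t (interior_subset ht)).differentiableAt.differentiableWithinAt) ?_
      intro t ht
      rw [(hder t (interior_subset ht)).deriv]
      have := hconvex _ (hseg t (interior_subset ht)) v
      linarith
    intro t ht
    have := hm (Set.left_mem_Icc.2 zero_le_one) ht ht.1
    simp at this
    linarith
  have hm : MonotoneOn (fun t : ℝ => h (x + t • v) - (∑ i, om x i * v i) * t - ν * Q / 2 * t ^ 2) (Set.Icc 0 1) := by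
    have hder : ∀ t ∈ Set.Icc (0:ℝ) 1, HasDerivAt
        (fun t : ℝ => h (x + t • v) - (∑ i, om x i * v i) * t - ν * Q / 2 * t ^ 2)
        (∑ i, om (x + t • v) i * v i - (∑ i, om x i * v i) - ν * Q * t) t := by
      intro t ht
      have := ((hu t ht).sub ((hasDerivAt_id t).const_mul (∑ i, om x i * v i))).sub
        ((hasDerivAt_pow 2 t).const_mul (ν * Q / 2))
      refine this.congr_deriv ?_
      simp; ring
    refine monotoneOn_of_deriv_nonneg (convex_Icc 0 1) (fun t ht => (hder t ht).continuousAt.continuousWithinAt)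
        (fun t ht => (hder t (interior_subset ht)).differentiableAt.differentiableWithinAt) ?_
    intro t ht
    rw [(hder t (interior_subset ht)).deriv]
    have := mono1 t (interior_subset ht)
    linarith
  have := hm (Set.left_mem_Icc.2 zero_le_one) (Set.right_mem_Icc.2 zero_le_one) zero_le_one
  have e1 : x + (y - x) = y := by abel
  simp [hv] at this
  simp only [hQ, hv, Pi.sub_apply] at this
  linarith

/-- realness of directional derivatives -/
theorem real_deriv {E : Type*} [NormedAddCommGroup E] [NormedSpace ℂ E] {H : E → ℂ} {z v : E}
    (hH : DifferentiableAt ℂ H z) (hr : ∀ᶠ t : ℝ in nhds (0:ℝ), (H (z + (t:ℂ) • v)).im = 0) :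
    (fderiv ℂ H z v).im = 0 := by
  have l2 : HasDerivAt (fun t : ℝ => z + (t:ℂ) • v) v 0 := by
    have := ((Complex.ofRealCLM.hasDerivAt (x := (0:ℝ))).smul_const v).const_add z
    simpa using this
  have hz0 : z + ((0:ℝ):ℂ) • v = z := by simp
  have d2 : HasDerivAt (fun t : ℝ => H (z + (t:ℂ) • v)) (fderiv ℂ H z v) 0 := by
    have h1 : HasFDerivAt H ((fderiv ℂ H z).restrictScalars ℝ)
      (z + ((0:ℝ):ℂ) • v) := by rw [hz0]; exact hH.hasFDerivAt.restrictScalars ℝ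
    exact h1.comp_hasDerivAt (0:ℝ) l2
  have d3 : HasDerivAt (fun t : ℝ => (H (z + (t:ℂ) • v)).im) (fderiv ℂ H z v).im 0 :=
    Complex.imCLM.hasFDerivAt.comp_hasDerivAt (0:ℝ) d2
  have d4 : HasDerivAt (fun t : ℝ => (H (z + (t:ℂ) • v)).im) 0 0 :=
    (hasDerivAt_const (0:ℝ) (0:ℝ)).congr_of_eventuallyEq hr
  exact d3.unique d4

/-- rescaled one-step generating function -/
noncomputable def gk (H : (Fin d → ℂ) → ℂ) (s : (Fin d → ℂ) × (Fin d → ℂ) → ℂ)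
    (c : Fin d → ℂ) (ρ ε : ℂ) (om τ : Fin d → ℂ) (z : (Fin d → ℂ) × (Fin d → ℂ)) : ℂ :=
  (H (c + ρ • z.1) - H c - ρ * ∑ i, om i * z.1 i) / ρ + ε / ρ * s (c + ρ • z.1, z.2 + τ)

theorem gk_deriv {H : (Fin d → ℂ) → ℂ} {s : (Fin d → ℂ) × (Fin d → ℂ) → ℂ}
    {c : Fin d → ℂ} {ρ ε : ℂ} {om τ : Fin d → ℂ} {z : (Fin d → ℂ) × (Fin d → ℂ)} (hρ : ρ ≠ 0)
    (hH : DifferentiableAt ℂ H (c + ρ • z.1)) (hs : DifferentiableAt ℂ s (c + ρ • z.1, z.2 + τ)) (i : Fin d) :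
    fderiv ℂ (gk H s c ρ ε om τ) z (0, Pi.single i 1)
      = ε / ρ * fderiv ℂ s (c + ρ • z.1, z.2 + τ) (0, Pi.single i 1) ∧
    fderiv ℂ (gk H s c ρ ε om τ) z (Pi.single i 1, 0)
      = fderiv ℂ H (c + ρ • z.1) (Pi.single i 1) - om i
        + ε * fderiv ℂ s (c + ρ • z.1, z.2 + τ) (Pi.single i 1, 0) := by
  set P1 := ContinuousLinearMap.fst ℂ (Fin d → ℂ) (Fin d → ℂ)
  set P2 := ContinuousLinearMap.snd ℂ (Fin d → ℂ) (Fin d → ℂ)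
  have a1 : HasFDerivAt (fun z : (Fin d → ℂ) × (Fin d → ℂ) => c + ρ • z.1) (ρ • P1) z :=
    (P1.hasFDerivAt.const_smul ρ).const_add c
  have a2 : HasFDerivAt (fun z : (Fin d → ℂ) × (Fin d → ℂ) => z.2 + τ) P2 z :=
    P2.hasFDerivAt.add_const τ
  have a3 : HasFDerivAt (fun z : (Fin d → ℂ) × (Fin d → ℂ) => (c + ρ • z.1, z.2 + τ)) ((ρ • P1).prod P2) z :=
    a1.prodMk a2
  have b1 : HasFDerivAt (fun z : (Fin d → ℂ) × (Fin d → ℂ) => H (c + ρ • z.1)) _ z :=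
    hH.hasFDerivAt.comp z a1
  have b2 : HasFDerivAt (fun z : (Fin d → ℂ) × (Fin d → ℂ) => s (c + ρ • z.1, z.2 + τ)) _ z :=
    hs.hasFDerivAt.comp (f := fun z : (Fin d → ℂ) × (Fin d → ℂ) => (c + ρ • z.1, z.2 + τ)) z a3
  have b3 : HasFDerivAt (fun z : (Fin d → ℂ) × (Fin d → ℂ) => ∑ i, om i * z.1 i) _ z :=
    HasFDerivAt.fun_sum (u := Finset.univ) fun i _ =>
      (((ContinuousLinearMap.proj i).comp P1).hasFDerivAt (x := z)).const_mul (om i)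
  have h5 := (((b1.sub_const (H c)).sub (b3.const_mul ρ)).mul_const (ρ⁻¹)).add (b2.const_mul (ε / ρ))
  have e : ∀ v, fderiv ℂ (gk H s c ρ ε om τ) z v = _ := fun v =>
    congrArg (fun l => l v) (HasFDerivAt.fderiv (f := gk H s c ρ ε om τ) h5)
  constructor
  · rw [e]
    simp [P1, P2]
  · rw [e]
    simp [P1, P2, Pi.single_apply]
    have e2 : ((ρ • (Pi.single i 1 : Fin d → ℂ), 0) : (Fin d → ℂ) × (Fin d → ℂ))
        = ρ • (Pi.single i 1, 0) := by ext <;> simp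
    rw [e2, map_smul, smul_eq_mul]
    field_simp

end Nek

namespace Nek
open Metric
variable {d : ℕ}

theorem cx_eq (v : Fin d → ℝ) : cx d v = cxv v := rfl

theorem sphi_bound {r Ms : ℝ} (hr : 0 < r) {DF : Set (CPhase d)} {s : CPhase d → ℂ}
    (hsa : AnalyticOnNhd ℂ s DF) (hsb : ∀ z ∈ DF, ‖s z‖ ≤ Ms) {I : Fin d → ℂ} {φ : Fin d → ℂ}
    (hD : ∀ ψ ∈ ball φ r, (I, ψ) ∈ DF) (i : Fin d) :
    ‖fderiv ℂ s (I, φ) (0, Pi.single i 1)‖ ≤ Ms / r := by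
  have hj : ∀ ψ, HasFDerivAt (fun ψ : Fin d → ℂ => (I, ψ)) (ContinuousLinearMap.inr ℂ (Fin d → ℂ) (Fin d → ℂ)) ψ := by
    intro ψ
    exact (hasFDerivAt_const I ψ).prodMk (hasFDerivAt_id ψ)
  have hd : ∀ ψ ∈ ball φ r, HasFDerivAt (fun ψ : Fin d → ℂ => s (I, ψ))
      ((fderiv ℂ s (I, ψ)).comp (ContinuousLinearMap.inr ℂ (Fin d → ℂ) (Fin d → ℂ))) ψ := fun ψ hψ =>
    (hsa _ (hD ψ hψ)).differentiableAt.hasFDerivAt.comp (f := fun ψ : Fin d → ℂ => (I, ψ)) ψ (hj ψ)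
  have hc := cauchy_fderiv (g := fun ψ : Fin d → ℂ => s (I, ψ)) (x := φ) (M := Ms) hr
    (fun ψ hψ => (hd ψ hψ).differentiableAt.differentiableWithinAt) (fun ψ hψ => hsb _ (hD ψ hψ))
  have h1 := (fderiv ℂ (fun ψ : Fin d → ℂ => s (I, ψ)) φ).le_opNorm (Pi.single i 1)
  rw [(hd φ (mem_ball_self hr)).fderiv] at h1 hc
  rw [Pi.norm_single, norm_one, mul_one] at h1
  exact h1.trans hc

theorem im_le {φ ψ : Fin d → ℂ} {r : ℝ} (hφ : ∀ i, (φ i).im = 0) (h : ‖ψ - φ‖ ≤ r) (i : Fin d) :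
    |(ψ i).im| ≤ r := by
  have h1 := (Complex.abs_im_le_norm ((ψ - φ) i)).trans ((norm_le_pi_norm (ψ - φ) i).trans h)
  simpa [hφ i] using h1

theorem gk_analytic {H : (Fin d → ℂ) → ℂ} {s : (Fin d → ℂ) × (Fin d → ℂ) → ℂ}
    {c : Fin d → ℂ} {ρ ε : ℂ} {om τ : Fin d → ℂ} {z : (Fin d → ℂ) × (Fin d → ℂ)}
    (hH : AnalyticAt ℂ H (c + ρ • z.1)) (hs : AnalyticAt ℂ s (c + ρ • z.1, z.2 + τ)) :
    AnalyticAt ℂ (gk H s c ρ ε om τ) z := by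
  have a1 : AnalyticAt ℂ (fun z : (Fin d → ℂ) × (Fin d → ℂ) => c + ρ • z.1) z :=
    analyticAt_const.add ((ρ • ContinuousLinearMap.fst ℂ (Fin d → ℂ) (Fin d → ℂ)).analyticAt z)
  have a2 : AnalyticAt ℂ (fun z : (Fin d → ℂ) × (Fin d → ℂ) => z.2 + τ) z :=
    analyticAt_snd.add analyticAt_const
  have b1 : AnalyticAt ℂ (fun z : (Fin d → ℂ) × (Fin d → ℂ) => H (c + ρ • z.1)) z :=
    hH.comp_of_eq a1 rfl
  have b2 : AnalyticAt ℂ (fun z : (Fin d → ℂ) × (Fin d → ℂ) => s (c + ρ • z.1, z.2 + τ)) z :=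
    hs.comp_of_eq (a1.prod a2) rfl
  have b3 : AnalyticAt ℂ (fun z : (Fin d → ℂ) × (Fin d → ℂ) => ∑ i, om i * z.1 i) z := by
    refine Finset.analyticAt_fun_sum _ fun i _ => analyticAt_const.mul ?_
    exact ((ContinuousLinearMap.proj i).comp
      (ContinuousLinearMap.fst ℂ (Fin d → ℂ) (Fin d → ℂ))).analyticAt z
  have h := (((b1.sub (analyticAt_const (v := H c))).sub ((analyticAt_const (v := ρ)).mul b3)).mul
    (analyticAt_const (v := ρ⁻¹))).add ((analyticAt_const (v := ε / ρ)).mul b2)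
  refine h.congr (Filter.Eventually.of_forall fun w => ?_)
  simp [gk, div_eq_mul_inv]

/-- bound of the rescaled generating function -/
theorem gk_bound {H : (Fin d → ℂ) → ℂ} {s : (Fin d → ℂ) × (Fin d → ℂ) → ℂ}
    {c : Fin d → ℂ} {ρ ε δ0 M0 Ms K : ℝ} {om om' τ : Fin d → ℂ} {z : (Fin d → ℂ) × (Fin d → ℂ)}
    (hδ0 : 0 < δ0) (hH : AnalyticOnNhd ℂ H (ball c δ0)) (hM : ∀ z ∈ ball c δ0, ‖H z‖ ≤ M0)
    (hom : ∀ i, fderiv ℂ H c (Pi.single i 1) = om i) (hq : ∀ i, ‖om i - om' i‖ ≤ ρ)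
    (hρ : 0 < ρ) (hρδ : 12 * ρ < δ0) (hε : 0 ≤ ε) (hεK : ε ≤ ρ ^ 2 * K)
    (hz : ‖z.1‖ ≤ 3) (hs : ‖s (c + (ρ:ℂ) • z.1, z.2 + τ)‖ ≤ Ms) :
    ‖gk H s c ρ ε om' τ z‖ ≤ (72 * M0 / δ0 ^ 2 + 3 * d + K * Ms) * ρ := by
  have hM0 : 0 ≤ M0 := (norm_nonneg _).trans (hM c (mem_ball_self hδ0))
  have hMs0 : 0 ≤ Ms := (norm_nonneg _).trans hs
  have hρc : (ρ:ℂ) ≠ 0 := by exact_mod_cast hρ.ne'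
  have hn : ‖(ρ:ℂ) • z.1‖ ≤ 3 * ρ := by
    rw [norm_smul, Complex.norm_real, Real.norm_of_nonneg hρ.le]
    nlinarith
  have hl : fderiv ℂ H c ((ρ:ℂ) • z.1) = ρ * ∑ i, om i * z.1 i := by
    rw [map_smul, smul_eq_mul]
    congr 1
    have e : z.1 = ∑ i, z.1 i • (Pi.single i 1 : Fin d → ℂ) := by
      ext k; simp [Finset.sum_apply, Pi.single_apply]
    conv_lhs => rw [e]
    rw [map_sum]
    refine Finset.sum_congr rfl fun i _ => ?_
    rw [map_smul, hom, smul_eq_mul, mul_comm]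
  have h1 := ext_quad (z := c + (ρ:ℂ) • z.1) hδ0 hH hM (by
    rw [add_sub_cancel_left]; linarith)
  rw [add_sub_cancel_left, hl] at h1
  have e : gk H s c ρ ε om' τ z = (H (c + (ρ:ℂ) • z.1) - H c - ρ * ∑ i, om i * z.1 i) / ρ
      + ∑ i, (om i - om' i) * z.1 i + ε / ρ * s (c + (ρ:ℂ) • z.1, z.2 + τ) := by
    simp only [gk, sub_mul, Finset.sum_sub_distrib]
    field_simp
    ring
  rw [e]
  have t1 : ‖(H (c + (ρ:ℂ) • z.1) - H c - ρ * ∑ i, om i * z.1 i) / ρ‖ ≤ 72 * M0 / δ0 ^ 2 * ρ := by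
    rw [norm_div, Complex.norm_real, Real.norm_of_nonneg hρ.le, div_le_iff₀ hρ]
    refine h1.trans ?_
    have : ‖(ρ:ℂ) • z.1‖ ^ 2 ≤ (3 * ρ) ^ 2 := pow_le_pow_left₀ (norm_nonneg _) hn 2
    calc 8 * M0 / δ0 ^ 2 * ‖(ρ:ℂ) • z.1‖ ^ 2 ≤ 8 * M0 / δ0 ^ 2 * (3 * ρ) ^ 2 :=
          mul_le_mul_of_nonneg_left this (by positivity)
      _ = _ := by ring
  have t2 : ‖∑ i, (om i - om' i) * z.1 i‖ ≤ d * (ρ * 3) := by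
    refine (norm_sum_le _ _).trans ?_
    refine (Finset.sum_le_card_nsmul _ _ (ρ * 3) fun i _ => ?_).trans (by simp)
    rw [norm_mul]
    exact mul_le_mul (hq i) ((norm_le_pi_norm _ i).trans hz) (norm_nonneg _) hρ.le
  have t3 : ‖(ε:ℂ) / ρ * s (c + (ρ:ℂ) • z.1, z.2 + τ)‖ ≤ ρ * K * Ms := by
    rw [norm_mul, norm_div, Complex.norm_real, Complex.norm_real, Real.norm_of_nonneg hρ.le,
      Real.norm_of_nonneg hε]
    have : ε / ρ ≤ ρ * K := by
      rw [div_le_iff₀ hρ]; linarith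
    exact mul_le_mul this hs (norm_nonneg _) (le_trans (by positivity) this)
  have := norm_add₃_le (a := (H (c + (ρ:ℂ) • z.1) - H c - ρ * ∑ i, om i * z.1 i) / ρ)
    (b := ∑ i, (om i - om' i) * z.1 i) (c := (ε:ℂ) / ρ * s (c + (ρ:ℂ) • z.1, z.2 + τ))
  linarith

theorem sq_norm_le (J : Fin d → ℝ) : ‖J‖ ^ 2 ≤ ∑ i, J i ^ 2 := by
  have h0 : 0 ≤ ∑ i, J i ^ 2 := Finset.sum_nonneg fun i _ => sq_nonneg _
  have : ‖J‖ ≤ Real.sqrt (∑ i, J i ^ 2) := by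
    rw [pi_norm_le_iff_of_nonneg (Real.sqrt_nonneg _)]
    intro i
    rw [Real.norm_eq_abs]
    refine Real.abs_le_sqrt ?_
    exact Finset.single_le_sum (f := fun i => J i ^ 2) (fun i _ => sq_nonneg _) (Finset.mem_univ i)
  calc ‖J‖ ^ 2 ≤ Real.sqrt (∑ i, J i ^ 2) ^ 2 := pow_le_pow_left₀ (norm_nonneg _) this 2
    _ = _ := Real.sq_sqrt h0

end Nek

namespace Nek
open Metric
variable {d : ℕ}

/-- One real step in rescaled variables. -/
theorem real_step {σ r Ms ε δ0 ρ b : ℝ} {BR : Set (Fin d → ℝ)} {DF : Set (CPhase d)} (hr : 0 < r) (hε : 0 ≤ ε)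
    (hDF : ∀ z : CPhase d, (∃ y ∈ BR, dist z.1 (cx d y) ≤ σ) → (∀ i, |(z.2 i).im| ≤ r) → z ∈ DF)
    {h₀ : (Fin d → ℝ) → ℝ} {ω : (Fin d → ℝ) → Fin d → ℝ}
    (hω : ∀ I, (∃ y ∈ BR, dist I y ≤ σ) → HasFDerivAt h₀
      (∑ i, ω I i • (ContinuousLinearMap.proj i : (Fin d → ℝ) →L[ℝ] ℝ)) I)
    {s : CPhase d → ℂ} (hsa : AnalyticOnNhd ℂ s DF)
    (hsreal : ∀ x : RPhase d, (cx d x.1, cx d x.2) ∈ DF → (s (cx d x.1, cx d x.2)).im = 0)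
    (hsb : ∀ z ∈ DF, ‖s z‖ ≤ Ms)
    {H : (Fin d → ℂ) → ℂ} {I0 : Fin d → ℝ} (hI0 : I0 ∈ BR)
    (hH : AnalyticOnNhd ℂ H (ball (cxv I0) δ0)) (he : ∀ I ∈ ball I0 δ0, H (cxv I) = (h₀ I : ℂ))
    (hρ : 0 < ρ) (hρδ : 12 * ρ < δ0) (hρσ : 6 * ρ ≤ σ)
    (hb : ε / ρ * (Ms / r) ≤ b) (hb1 : b ≤ 1 / 16)
    {I φ I' φ' om τ : Fin d → ℝ} (hI : ‖I - I0‖ ≤ 5 / 2 * ρ)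
    (hI'σ : ∃ y ∈ BR, dist I' y ≤ σ)
    (h1 : ∀ i, I' i = I i - ε * (fderiv ℂ s (cx d I', cx d φ) (0, Pi.single i 1)).re)
    (h2 : ∀ i, φ' i = φ i + ω I' i + ε * (fderiv ℂ s (cx d I', cx d φ) (Pi.single i 1, 0)).re) :
    Step (gk H s (cxv I0) ρ ε (cxv om) (cxv τ))
      (cxv (ρ⁻¹ • (I - I0)), cxv (φ - τ)) (cxv (ρ⁻¹ • (I' - I0)), cxv (φ' - τ - om)) ∧
    ‖cxv (ρ⁻¹ • (I' - I0)) - cxv (ρ⁻¹ • (I - I0))‖ ≤ b := by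
  have hcx : ∀ v : Fin d → ℝ, ∀ i, ((cx d v) i).im = 0 := fun v i => by simp [cx]
  have hDmem : ∀ ψ ∈ ball (cx d φ) r, (cx d I', ψ) ∈ DF := by
    intro ψ hψ
    rw [mem_ball, dist_eq_norm] at hψ
    obtain ⟨y, hy, hd⟩ := hI'σ
    refine hDF _ ⟨y, hy, ?_⟩ (im_le (hcx φ) hψ.le)
    rw [dist_eq_norm, cx_eq, cx_eq, ← cxv_sub, cxv_norm, ← dist_eq_norm]; exact hd
  have hcau := fun i => sphi_bound hr hsa hsb hDmem i
  have hMr : 0 ≤ Ms / r :=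
    div_nonneg ((norm_nonneg _).trans (hsb _ (hDmem _ (mem_ball_self hr)))) hr.le
  have hdiff : ‖I' - I‖ ≤ b * ρ := by
    have hbρ : ε * (Ms / r) ≤ b * ρ := by
      have : ε / ρ * (Ms / r) * ρ ≤ b * ρ := by gcongr
      calc ε * (Ms / r) = ε / ρ * (Ms / r) * ρ := by field_simp
        _ ≤ _ := this
    refine (pi_norm_le_iff_of_nonneg ((mul_nonneg hε hMr).trans hbρ)).2 fun i => ?_
    rw [Pi.sub_apply, h1 i, sub_sub_cancel_left, norm_neg, norm_mul, Real.norm_of_nonneg hε]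
    refine le_trans ?_ hbρ
    refine mul_le_mul_of_nonneg_left ?_ hε
    exact (Complex.abs_re_le_norm _).trans (hcau i)
  have hbn : ‖cxv (ρ⁻¹ • (I' - I0)) - cxv (ρ⁻¹ • (I - I0))‖ ≤ b := by
    rw [← cxv_sub, cxv_norm, ← smul_sub, sub_sub_sub_cancel_right, norm_smul, norm_inv,
      Real.norm_of_nonneg hρ.le, inv_mul_le_iff₀ hρ]
    linarith
  refine ⟨?_, hbn⟩
  have hI' : ‖I' - I0‖ < 3 * ρ := by
    have := norm_add_le (I' - I) (I - I0)
    rw [sub_add_sub_cancel] at this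
    nlinarith
  have hI'b : I' ∈ ball I0 δ0 := by rw [mem_ball, dist_eq_norm]; linarith
  have ezI : cxv I0 + (ρ:ℂ) • cxv (ρ⁻¹ • (I' - I0)) = cx d I' := by
    ext i
    have : (ρ:ℂ) ≠ 0 := by exact_mod_cast hρ.ne'
    simp [cxv, cx]
    field_simp
    ring
  have ezφ : cxv (φ - τ) + cxv τ = cx d φ := by ext i; simp [cxv, cx]
  have hsd : DifferentiableAt ℂ s (cx d I', cx d φ) := (hsa _ (hDmem _ (mem_ball_self hr))).differentiableAt
  -- realness
  have hDreal : ∀ J ψ : Fin d → ℝ, ‖J - I0‖ ≤ σ → (cx d J, cx d ψ) ∈ DF := by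
    intro J ψ hJ
    refine hDF _ ⟨I0, hI0, ?_⟩ (fun i => by rw [hcx, abs_zero]; exact hr.le)
    rw [dist_eq_norm]
    change ‖cxv J - cxv I0‖ ≤ σ
    rw [← cxv_sub, cxv_norm]; exact hJ
  have r1 : ∀ i, (fderiv ℂ s (cx d I', cx d φ) (0, Pi.single i 1)).im = 0 := by
    intro i
    refine real_deriv hsd (Filter.Eventually.of_forall fun t => ?_)
    have e : ((cx d I', cx d φ) : CPhase d) + (t:ℂ) • (0, Pi.single i 1)
        = (cx d I', cx d (φ + t • (Pi.single i 1 : Fin d → ℝ))) := by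
      ext k
      · simp
      · by_cases hk : k = i <;> simp [cx, hk]
    rw [e]
    exact hsreal (I', φ + t • (Pi.single i 1 : Fin d → ℝ)) (hDreal _ _ (by linarith))
  have r2 : ∀ i, (fderiv ℂ s (cx d I', cx d φ) (Pi.single i 1, 0)).im = 0 := by
    intro i
    refine real_deriv hsd ?_
    have hc : ContinuousAt (fun t : ℝ => I' + t • (Pi.single i 1 : Fin d → ℝ)) 0 := by fun_prop
    have hev : ∀ᶠ t in nhds (0:ℝ), I' + t • (Pi.single i 1 : Fin d → ℝ) ∈ ball I0 (3 * ρ) := by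
      refine hc.eventually (isOpen_ball.mem_nhds ?_)
      rw [mem_ball, dist_eq_norm]; simpa using hI'
    filter_upwards [hev] with t ht
    have e : ((cx d I', cx d φ) : CPhase d) + (t:ℂ) • (Pi.single i 1, 0)
        = (cx d (I' + t • (Pi.single i 1 : Fin d → ℝ)), cx d φ) := by
      ext k
      · by_cases hk : k = i <;> simp [cx, hk]
      · simp
    rw [e]
    refine hsreal (I' + t • (Pi.single i 1 : Fin d → ℝ), φ) (hDreal _ _ ?_)
    rw [mem_ball, dist_eq_norm] at ht
    linarith
  have hre : ∀ z : ℂ, z.im = 0 → ((z.re : ℝ) : ℂ) = z := fun z hz => by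
    apply Complex.ext <;> simp [hz]
  have hHd : DifferentiableAt ℂ H (cx d I') := (hH _ (by
    rw [mem_ball, dist_eq_norm, cx_eq, ← cxv_sub, cxv_norm]; linarith)).differentiableAt
  have hρc : (ρ:ℂ) ≠ 0 := by exact_mod_cast hρ.ne'
  have hg := fun i => gk_deriv (H := H) (s := s) (c := cxv I0) (ρ := (ρ:ℂ)) (ε := (ε:ℂ)) (om := cxv om)
    (τ := cxv τ) (z := (cxv (ρ⁻¹ • (I' - I0)), cxv (φ - τ))) hρc (by simp only; rw [ezI]; exact hHd)
    (by simp only; rw [ezI, ezφ]; exact hsd) i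
  simp only [ezI, ezφ] at hg
  constructor
  · intro i
    rw [(hg i).1, ← hre _ (r1 i)]
    have := h1 i
    simp only [cxv, Pi.smul_apply, Pi.sub_apply, smul_eq_mul]
    rw [this]
    push_cast
    field_simp
    ring
  · intro i
    rw [(hg i).2, ← hre _ (r2 i), cx_eq I', ext_deriv hH he hI'b (hω I' hI'σ) i]
    have := h2 i
    simp only [cxv, Pi.sub_apply]
    rw [this]
    push_cast
    simp only [cx_eq]
    ring

end Nek

namespace Nek
open Metric
variable {d : ℕ}

theorem gk_low {BR : Set (Fin d → ℝ)} {ν σ Ms ε δ0 ρ A : ℝ} (hd : 1 ≤ d) (hν : 0 < ν)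
    {h₀ : (Fin d → ℝ) → ℝ} {ω : (Fin d → ℝ) → Fin d → ℝ}
    (hω : ∀ I, (∃ y ∈ BR, dist I y ≤ σ) → HasFDerivAt h₀
      (∑ i, ω I i • (ContinuousLinearMap.proj i : (Fin d → ℝ) →L[ℝ] ℝ)) I)
    (hconvex : ∀ I, (∃ y ∈ BR, dist I y ≤ σ) → ∀ v : Fin d → ℝ,
      ν * ∑ i, v i ^ 2 ≤ ∑ i, fderiv ℝ ω I v i * v i)
    {H : (Fin d → ℂ) → ℂ} {s : CPhase d → ℂ} {I0 : Fin d → ℝ} (hI0 : I0 ∈ BR)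
    (he : ∀ I ∈ ball I0 δ0, H (cxv I) = (h₀ I : ℂ)) (hε : 0 ≤ ε)
    (hρ : 0 < ρ) (hρδ : 12 * ρ < δ0) (hρσ : 6 * ρ ≤ σ)
    {om : Fin d → ℝ} (hom : ∀ i, |om i - ω I0 i| ≤ ρ / A) (hA : 0 < A) (hdA : d / A ≤ ν / 4)
    {J : Fin d → ℝ} (hJ1 : 1 < ‖J‖) (hJ2 : ‖J‖ ≤ 2) {τ ψ : Fin d → ℂ}
    (hs : ‖s (cxv I0 + (ρ:ℂ) • cxv J, ψ + τ)‖ ≤ Ms) :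
    ρ * ν / 4 - ε * Ms / ρ ≤ (gk H s (cxv I0) ρ ε (cxv om) τ (cxv J, ψ)).re := by
  have hn : ‖ρ • J‖ ≤ 2 * ρ := by
    rw [norm_smul, Real.norm_of_nonneg hρ.le]; nlinarith
  have hIb : I0 + ρ • J ∈ closedBall I0 σ := by
    rw [mem_closedBall, dist_eq_norm, add_sub_cancel_left]; linarith
  have hIb' : I0 + ρ • J ∈ ball I0 δ0 := by
    rw [mem_ball, dist_eq_norm, add_sub_cancel_left]; linarith
  have h0b : I0 ∈ closedBall I0 σ := mem_closedBall_self (by linarith)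
  have hsub : ∀ I ∈ closedBall I0 σ, ∃ y ∈ BR, dist I y ≤ σ := fun I hI => ⟨I0, hI0, hI⟩
  have hsc := strong_conv (h := h₀) (om := ω) hd hν (convex_closedBall I0 σ) (fun I hI => hω I (hsub I hI))
    (fun I hI => hconvex I (hsub I hI)) h0b hIb
  have e1 : cxv I0 + (ρ:ℂ) • cxv J = cxv (I0 + ρ • J) := by ext i; simp [cxv]
  have eg : (gk H s (cxv I0) ρ ε (cxv om) τ (cxv J, ψ)).re
      = (h₀ (I0 + ρ • J) - h₀ I0 - ρ * ∑ i, om i * J i) / ρ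
        + ε / ρ * (s (cxv I0 + (ρ:ℂ) • cxv J, ψ + τ)).re := by
    have : gk H s (cxv I0) ρ ε (cxv om) τ (cxv J, ψ)
      = (((h₀ (I0 + ρ • J) - h₀ I0 - ρ * ∑ i, om i * J i) / ρ : ℝ) : ℂ)
        + ((ε / ρ : ℝ) : ℂ) * (s (cxv I0 + (ρ:ℂ) • cxv J, ψ + τ)) := by
      have e2 := he _ (mem_ball_self (show 0 < δ0 by linarith) : I0 ∈ ball I0 δ0)
      have e3 := he _ hIb'
      simp only [gk]
      rw [e2]
      conv_lhs => rw [show H (cxv I0 + (ρ:ℂ) • cxv J) = (h₀ (I0 + ρ • J) : ℂ) by rw [e1, e3]]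
      push_cast
      rfl
    rw [this, Complex.add_re, Complex.ofReal_re, Complex.re_ofReal_mul]
  rw [eg]
  have hs' : -Ms ≤ (s (cxv I0 + (ρ:ℂ) • cxv J, ψ + τ)).re :=
    (abs_le.1 ((Complex.abs_re_le_norm _).trans hs)).1
  have t1 : -(ε * Ms / ρ) ≤ ε / ρ * (s (cxv I0 + (ρ:ℂ) • cxv J, ψ + τ)).re := by
    have : ε / ρ * (-Ms) ≤ ε / ρ * (s (cxv I0 + (ρ:ℂ) • cxv J, ψ + τ)).re :=
      mul_le_mul_of_nonneg_left hs' (by positivity)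
    calc _ = ε / ρ * (-Ms) := by ring
      _ ≤ _ := this
  have t2 : ∑ i, (om i - ω I0 i) * J i ≤ d * (ρ / A * ‖J‖) := by
    refine (Finset.sum_le_card_nsmul _ _ (ρ / A * ‖J‖) fun i _ => ?_).trans (by simp)
    refine (le_abs_self _).trans ?_
    rw [abs_mul]
    exact mul_le_mul (hom i) (norm_le_pi_norm J i) (abs_nonneg _) (by positivity)
  have t3 := sq_norm_le J
  have t4 : ρ * ν / 4 ≤ (h₀ (I0 + ρ • J) - h₀ I0 - ρ * ∑ i, om i * J i) / ρ := by
    rw [le_div_iff₀ hρ]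
    simp only [Pi.add_apply, Pi.smul_apply, smul_eq_mul, add_sub_cancel_left] at hsc
    have q1 : ∑ i, (ρ * J i) ^ 2 = ρ ^ 2 * ∑ i, J i ^ 2 := by
      rw [Finset.mul_sum]; exact Finset.sum_congr rfl fun i _ => by ring
    have q2 : ∑ i, ω I0 i * (ρ * J i) = ρ * ∑ i, ω I0 i * J i := by
      rw [Finset.mul_sum]; exact Finset.sum_congr rfl fun i _ => by ring
    rw [q1, q2] at hsc
    simp only [sub_mul, Finset.sum_sub_distrib] at t2
    have t5 : (d:ℝ) * (ρ / A * ‖J‖) ≤ ρ * (ν / 4 * ‖J‖) := by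
      calc (d:ℝ) * (ρ / A * ‖J‖) = ρ * (d / A * ‖J‖) := by ring
        _ ≤ _ := by gcongr
    have t6 : ν / 2 * (ρ ^ 2 * ‖J‖ ^ 2) ≤ ν / 2 * (ρ ^ 2 * ∑ i, J i ^ 2) := by gcongr
    have t7 : ρ * (∑ i, om i * J i - ∑ i, ω I0 i * J i) ≤ ρ * (ρ * (ν / 4 * ‖J‖)) :=
      mul_le_mul_of_nonneg_left (t2.trans t5) hρ.le
    have t8 : 0 ≤ ρ ^ 2 * ν / 4 * ((‖J‖ - 1) * (2 * ‖J‖ + 1)) := by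
      have : 0 ≤ (‖J‖ - 1) * (2 * ‖J‖ + 1) := mul_nonneg (by linarith) (by linarith)
      positivity
    nlinarith
  linarith

end Nek

namespace Nek
open Metric
variable {d : ℕ}

theorem orbit_bound {BR : Set (Fin d → ℝ)} {DF : Set (CPhase d)}
    {ν σ r Ms M0 ε δ0 ρ A K δ b κ μ : ℝ} (hd : 1 ≤ d) (hν : 0 < ν) (hr : 0 < r) (hε : 0 ≤ ε)
    (hDF : ∀ z : CPhase d, (∃ y ∈ BR, dist z.1 (cx d y) ≤ σ) → (∀ i, |(z.2 i).im| ≤ r) → z ∈ DF)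
    {h₀ : (Fin d → ℝ) → ℝ} {ω : (Fin d → ℝ) → Fin d → ℝ}
    (hω : ∀ I, (∃ y ∈ BR, dist I y ≤ σ) → HasFDerivAt h₀
      (∑ i, ω I i • (ContinuousLinearMap.proj i : (Fin d → ℝ) →L[ℝ] ℝ)) I)
    (hconvex : ∀ I, (∃ y ∈ BR, dist I y ≤ σ) → ∀ v : Fin d → ℝ,
      ν * ∑ i, v i ^ 2 ≤ ∑ i, fderiv ℝ ω I v i * v i)
    {s : CPhase d → ℂ} (hsa : AnalyticOnNhd ℂ s DF)
    (hsreal : ∀ x : RPhase d, (cx d x.1, cx d x.2) ∈ DF → (s (cx d x.1, cx d x.2)).im = 0)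
    (hsb : ∀ z ∈ DF, ‖s z‖ ≤ Ms)
    {F : RPhase d → RPhase d}
    (hF : ∀ x : RPhase d, (∃ y ∈ BR, dist x.1 y ≤ σ / 2) →
      (∃ y ∈ BR, dist (F x).1 y ≤ σ) ∧
      (∀ i, (F x).1 i = x.1 i -
        ε * (fderiv ℂ s (cx d (F x).1, cx d x.2) (0, Pi.single i 1)).re) ∧
      (∀ i, (F x).2 i = x.2 i + ω (F x).1 i +
        ε * (fderiv ℂ s (cx d (F x).1, cx d x.2) (Pi.single i 1, 0)).re))
    (hlift : ∀ x : RPhase d, ∀ e : Fin d → ℤ,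
      F (x.1, x.2 + fun i => (e i : ℝ)) = ((F x).1, (F x).2 + fun i => (e i : ℝ)))
    {H : (Fin d → ℂ) → ℂ} {x₀ : RPhase d} (hI0 : x₀.1 ∈ BR)
    (hH : AnalyticOnNhd ℂ H (ball (cxv x₀.1) δ0)) (hM : ∀ z ∈ ball (cxv x₀.1) δ0, ‖H z‖ ≤ M0)
    (he : ∀ I ∈ ball x₀.1 δ0, H (cxv I) = (h₀ I : ℂ))
    (hρ : 0 < ρ) (hρδ : 12 * ρ < δ0) (hρσ : 6 * ρ ≤ σ)
    (hb : ε / ρ * (Ms / r) ≤ b) (hb1 : b ≤ δ / 16)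
    {T : ℕ} (hT : 1 ≤ T) (hTb : T * b ≤ 1 / 4) {p : Fin d → ℤ} (hA : 1 ≤ A)
    (hp : ∀ i, |(T:ℝ) * ω x₀.1 i - p i| ≤ T * ρ / A) (hdA : d / A ≤ ν / 4)
    (hδ : 0 < δ) (hδ1 : δ ≤ 1) (hδr : δ ≤ r) (hK : 0 ≤ K) (hεK : ε ≤ ρ ^ 2 * K)
    (hκ : κ = 4 * ((72 * M0 / δ0 ^ 2 + 3 * d + K * Ms) * ρ) / δ) (hμ : μ = T * κ)
    {m N : ℕ} (hm1 : 1 ≤ m) (hm : 200 * m * μ ≤ δ / 4)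
    (hN : T * (ε * Ms / ρ) + 2 * (1300 * (d + 1) * μ ^ 2 / δ) + N * (4 * (d + 1) * (2 / 3) ^ m)
      < T * (ρ * ν / 4 - ε * Ms / ρ)) :
    ∀ n ≤ N, ∀ j ≤ T, ‖(F^[n * T + j] x₀).1 - x₀.1‖ ≤ 2 * ρ := by
  have hTr : (0:ℝ) < T := by exact_mod_cast hT
  have hδ0 : 0 < δ0 := by linarith
  have hσ0 : 0 < σ := by linarith
  set x : ℕ → RPhase d := fun k => F^[k] x₀ with hx
  have hxs : ∀ k, x (k + 1) = F (x k) := fun k => Function.iterate_succ_apply' F k x₀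
  set I0 := x₀.1 with hI0d
  let pr' : Fin d → ℝ := fun i => (p i : ℝ)
  let om : Fin d → ℝ := (T:ℝ)⁻¹ • pr'
  have homT : (T:ℝ) • om = pr' := by simp only [om, smul_smul]; rw [mul_inv_cancel₀ hTr.ne', one_smul]
  have hom : ∀ i, |om i - ω I0 i| ≤ ρ / A := by
    intro i
    have e : om i - ω I0 i = -((T:ℝ) * ω I0 i - p i) / T := by
      simp only [om, pr', Pi.smul_apply, smul_eq_mul]; field_simp; ring
    rw [e, abs_div, abs_neg, abs_of_pos hTr, div_le_iff₀ hTr]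
    refine (hp i).trans (le_of_eq (by ring))
  let W : ℕ → ℕ → Fin d → ℝ := fun n k => (x (n * T + k)).2 - (n:ℝ) • pr'
  let Z : ℕ → ℕ → CPhase d := fun n k =>
    (cxv (ρ⁻¹ • ((x (n * T + k)).1 - I0)), cxv (W n k - (k:ℝ) • om))
  let g : ℕ → CPhase d → ℂ := fun k => gk H s (cxv I0) ρ ε (cxv om) (cxv ((k:ℝ) • om))
  have hZ1 : ∀ n k, ‖(Z n k).1‖ = ρ⁻¹ * ‖(x (n * T + k)).1 - I0‖ := by
    intro n k
    simp only [Z]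
    rw [cxv_norm, norm_smul, norm_inv, Real.norm_of_nonneg hρ.le]
  have hZx : ∀ n k c, ‖(Z n k).1‖ ≤ c ↔ ‖(x (n * T + k)).1 - I0‖ ≤ c * ρ := by
    intro n k c
    rw [hZ1, inv_mul_le_iff₀ hρ, mul_comm ρ c]
  have hstep1 : ∀ n k, ‖(Z n k).1‖ ≤ 5 / 2 →
      Step (g k) (Z n k) (Z n (k + 1)) ∧ ‖(Z n (k + 1)).1 - (Z n k).1‖ ≤ b := by
    intro n k hk
    rw [hZx] at hk
    have hl := hlift (x (n * T + k)) (fun i => -(n:ℤ) * p i)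
    have ew : (x (n * T + k)).2 + (fun i => ((-(n:ℤ) * p i : ℤ) : ℝ)) = W n k := by
      ext i; simp [W, pr']; ring
    have ew' : (x (n * T + k + 1)).2 + (fun i => ((-(n:ℤ) * p i : ℤ) : ℝ)) = W n (k + 1) := by
      ext i; simp [W, pr', add_assoc]; ring
    rw [ew, ← hxs, ew'] at hl
    have h3 := hF ((x (n * T + k)).1, W n k) ⟨I0, hI0, by rw [dist_eq_norm]; simp only; linarith⟩
    rw [hl] at h3
    obtain ⟨f1, f2, f3⟩ := h3
    have := real_step (b := b) (om := om) (τ := (k:ℝ) • om) hr hε hDF hω hsa hsreal hsb hI0 hH he hρ hρδ hρσ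
      hb (by linarith) hk f1 f2 f3
    have e5 : W n (k + 1) - (k:ℝ) • om - om = W n (k + 1) - ((k + 1 : ℕ):ℝ) • om := by
      push_cast; rw [add_smul, one_smul]; abel
    rw [e5] at this
    exact this
  have hdom : ∀ n, ‖(Z n 0).1‖ ≤ 2 → ∀ k : ℕ, ∀ z ∈ ball (Z n 0) δ,
      ‖z.1‖ ≤ 3 ∧ cxv I0 + (ρ:ℂ) • z.1 ∈ ball (cxv I0) δ0 ∧
      (cxv I0 + (ρ:ℂ) • z.1, z.2 + cxv ((k:ℝ) • om)) ∈ DF := by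
    intro n hn k z hz
    rw [mem_ball, dist_eq_norm, Prod.norm_def, max_lt_iff] at hz
    have hz1 : ‖z.1‖ ≤ 3 := by
      have h4 := norm_add_le (z.1 - (Z n 0).1) (Z n 0).1
      rw [sub_add_cancel] at h4
      have := hz.1
      simp only [Prod.fst_sub] at this
      linarith
    have hnn : ‖(ρ:ℂ) • z.1‖ ≤ 3 * ρ := by
      rw [norm_smul, Complex.norm_real, Real.norm_of_nonneg hρ.le]; nlinarith
    refine ⟨hz1, ?_, hDF _ ⟨I0, hI0, ?_⟩ ?_⟩
    · rw [mem_ball, dist_eq_norm, add_sub_cancel_left]; linarith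
    · rw [dist_eq_norm, cx_eq]; simp only; rw [add_sub_cancel_left]; linarith
    · refine im_le (φ := (Z n 0).2 + cxv ((k:ℝ) • om)) (fun i => by simp [Z, cxv]) ?_
      have := hz.2
      simp only [Prod.snd_sub] at this
      rw [add_sub_add_right_eq_sub]; linarith
  have hhom : ∀ i, fderiv ℂ H (cxv I0) (Pi.single i 1) = cxv (ω I0) i := fun i =>
    ext_deriv hH he (mem_ball_self hδ0) (hω I0 ⟨I0, hI0, by rw [dist_self]; exact hσ0.le⟩) i
  have hq : ∀ i, ‖cxv (ω I0) i - cxv om i‖ ≤ ρ := by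
    intro i
    have e : cxv (ω I0) i - cxv om i = ((ω I0 i - om i : ℝ) : ℂ) := by simp [cxv]
    rw [e, Complex.norm_real, Real.norm_eq_abs, abs_sub_comm]
    exact (hom i).trans (div_le_self hρ.le hA)
  have hZ00 : (Z 0 0).1 = 0 := by ext i; simp [Z, x, I0, cxv]
  have hMs0 : 0 ≤ Ms := (norm_nonneg _).trans (hsb _ (hdom 0 (by rw [hZ00]; simp) 0 _ (mem_ball_self hδ)).2.2)
  have hM0 : 0 ≤ M0 := (norm_nonneg _).trans (hM _ (mem_ball_self hδ0))
  have hmain := confine (d := d) (T := T) (g := g) (Z := Z) (m := m) (N := N) (δ := δ)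
    (γ := (72 * M0 / δ0 ^ 2 + 3 * d + K * Ms) * ρ) (κ := κ) (μ := μ) (e := T * (ε * Ms / ρ))
    (L := T * (ρ * ν / 4 - ε * Ms / ρ)) hT hδ hδ1 ?_ ?_ ?_ (by positivity) hκ hμ ?_ hm1 hm hZ00 ?_ ?_ hN
  · intro n hn j hj
    have := hmain n hn j hj
    rwa [hZx] at this
  · intro n
    have e1 : (n + 1) * T + 0 = n * T + T := by ring
    simp only [Z, W, e1]
    congr 2
    rw [homT]; push_cast; rw [add_smul, one_smul, zero_smul]; abel
  · intro n hn k hk z hz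
    obtain ⟨_, d2, d3⟩ := hdom n hn k z hz
    exact gk_analytic (hH _ d2) (hsa _ d3)
  · intro n hn k hk z hz
    obtain ⟨d1, d2, d3⟩ := hdom n hn k z hz
    exact gk_bound hδ0 hH hM hhom hq hρ hρδ hε hεK d1 (hsb _ d3)
  · intro n hn
    have hb0 : 0 ≤ b := le_trans (by positivity) hb
    have hind : ∀ j ≤ T, ‖(Z n j).1‖ ≤ 9 / 4 + j * b := by
      intro j
      induction j with
      | zero => intro _; simpa using hn
      | succ j ih =>
        intro hj
        have h1 := ih (by omega)
        have hjT : (j:ℝ) * b ≤ T * b := by gcongr; omega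
        have h2 := (hstep1 n j (by linarith)).2
        have h4 := norm_add_le ((Z n (j + 1)).1 - (Z n j).1) (Z n j).1
        rw [sub_add_cancel] at h4
        push_cast
        linarith
    intro j hj
    have hjT : (j:ℝ) * b ≤ T * b := by gcongr
    have := hstep1 n j (by linarith [hind j hj.le])
    exact ⟨this.1, this.2.trans hb1⟩
  · rw [Complex.re_sum]
    refine (Finset.sum_le_card_nsmul _ _ (ε * Ms / ρ) fun k _ => ?_).trans (by simp)
    have hs := hsb _ (hdom 0 (by rw [hZ00]; simp) k _ (mem_ball_self hδ)).2.2
    have e : g k (Z 0 0) = ((ε / ρ : ℝ) : ℂ) * s (cxv I0 + (ρ:ℂ) • (Z 0 0).1, (Z 0 0).2 + cxv ((k:ℝ) • om)) := by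
      simp only [g, gk, hZ00]; simp
    rw [e, Complex.re_ofReal_mul]
    calc _ ≤ ε / ρ * Ms := by
          refine mul_le_mul_of_nonneg_left ?_ (by positivity)
          exact ((le_abs_self _).trans (Complex.abs_re_le_norm _)).trans hs
      _ = _ := by ring
  · intro n h1 h2
    rw [Complex.re_sum]
    refine le_trans (by simp) (Finset.card_nsmul_le_sum (Finset.range T) _ (ρ * ν / 4 - ε * Ms / ρ) fun k _ => ?_)
    have hs := hsb _ (hdom n h2 k _ (mem_ball_self hδ)).2.2
    simp only [Z] at h1 h2
    rw [cxv_norm] at h1 h2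
    exact gk_low hd hν hω hconvex hI0 he hε hρ hρδ hρσ hom (by linarith) hdA h1 h2 hs

end Nek

namespace Nek

set_option maxHeartbeats 1000000 in
theorem params {d : ℕ} {ν σ r δ δ0 Ms C1 : ℝ} (hν : 0 < ν) (hσ : 0 < σ) (hr : 0 < r)
    (hδ : 0 < δ) (hδ1 : δ ≤ 1) (hδ0 : 0 < δ0) (hMs : 0 ≤ Ms) (hC1 : 0 < C1) :
    ∃ A η0 c2 c3 : ℝ, 1 ≤ A ∧ 0 < η0 ∧ η0 ≤ 1 ∧ 0 < c2 ∧ 0 < c3 ∧ d / A ≤ ν / 4 ∧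
      ∀ η, 0 < η → η ≤ η0 → ∀ T : ℕ, 1 ≤ T → (T:ℝ) ≤ (2 / η) ^ d → ∀ ρ ε : ℝ,
        ρ = A * η / T → ε = η ^ (2 * (d + 1)) → ∀ N : ℕ, (N:ℝ) ≤ c2 * Real.exp (c3 * η⁻¹) →
        12 * ρ < δ0 ∧ 6 * ρ ≤ σ ∧ ε / ρ * (Ms / r) ≤ δ / 16 ∧ T * (ε / ρ * (Ms / r)) ≤ 1 / 4 ∧
        ε ≤ ρ ^ 2 * 4 ^ d ∧ ∃ m : ℕ, 1 ≤ m ∧ 200 * m * (T * (4 * (C1 * ρ) / δ)) ≤ δ / 4 ∧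
        T * (ε * Ms / ρ) + 2 * (1300 * (d + 1) * (T * (4 * (C1 * ρ) / δ)) ^ 2 / δ)
          + N * (4 * (d + 1) * (2 / 3) ^ m) < T * (ρ * ν / 4 - ε * Ms / ρ) := by
  set K : ℝ := 4 ^ d with hK
  have hK0 : 0 < K := by positivity
  set A : ℝ := 1 + 4 * d / ν + 32 * K * Ms / ν with hAd
  have hA : 1 ≤ A := by
    have : 0 ≤ 4 * d / ν + 32 * K * Ms / ν := by positivity
    linarith
  have hA0 : 0 < A := by linarith
  have hA1 : d / A ≤ ν / 4 := by
    rw [div_le_iff₀ hA0]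
    have : 4 * d / ν ≤ A := by
      have : 0 ≤ 32 * K * Ms / ν := by positivity
      linarith
    rw [div_le_iff₀ hν] at this
    linarith
  have hA2 : K * Ms / A ≤ ν / 32 := by
    rw [div_le_iff₀ hA0]
    have : 32 * K * Ms / ν ≤ A := by
      have : 0 ≤ 4 * d / ν := by positivity
      linarith
    rw [div_le_iff₀ hν] at this
    linarith
  set a : ℝ := δ ^ 2 / (3200 * C1 * A) with ha
  have ha0 : 0 < a := by positivity
  set Q : ℝ := 2600 * (d + 1) * 16 * C1 ^ 2 * A / δ ^ 3 with hQ
  have hQ0 : 0 < Q := by positivity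
  have small : ∃ η0 : ℝ, 0 < η0 ∧ η0 ≤ 1 ∧ η0 ≤ a ∧ Q * η0 ≤ ν / 16 ∧ 12 * A * η0 < δ0 ∧ 6 * A * η0 ≤ σ ∧
      K * Ms / r * η0 ≤ δ / 16 := by
    refine ⟨min 1 (min a (min (ν / 16 / Q) (min (δ0 / (13 * A)) (min (σ / (6 * A))
      (δ / 16 / (K * Ms / r + 1)))))), ?_⟩
    set η0 := min 1 (min a (min (ν / 16 / Q) (min (δ0 / (13 * A)) (min (σ / (6 * A))
      (δ / 16 / (K * Ms / r + 1)))))) with hη0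
    have hpos : 0 < K * Ms / r + 1 := by positivity
    have h1 : 0 < η0 := by
      simp only [hη0, lt_min_iff]
      refine ⟨one_pos, ha0, by positivity, by positivity, by positivity, by positivity⟩
    have hall : η0 ≤ 1 ∧ η0 ≤ a ∧ η0 ≤ ν / 16 / Q ∧ η0 ≤ δ0 / (13 * A) ∧ η0 ≤ σ / (6 * A) ∧
        η0 ≤ δ / 16 / (K * Ms / r + 1) := by
      simp only [← le_min_iff]; exact le_rfl
    obtain ⟨b1, b2, b3, b4, b5, b6⟩ := hall
    rw [le_div_iff₀ hQ0] at b3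
    rw [le_div_iff₀ (by positivity)] at b4 b5
    rw [le_div_iff₀ hpos] at b6
    have : 0 < A * η0 := by positivity
    refine ⟨h1, b1, b2, by linarith, by nlinarith, by linarith, by nlinarith⟩
  obtain ⟨η0, e0, e1, e2, e3, e4, e5, e6⟩ := small
  refine ⟨A, η0, A * ν * a / (768 * (d + 1)), a / 6, hA, e0, e1, by positivity, by positivity, hA1, ?_⟩
  intro η hη hηη T hT hTd ρ ε hρ hε N hN
  have hT0 : (0:ℝ) < T := by exact_mod_cast hT
  have hT1 : (1:ℝ) ≤ T := by exact_mod_cast hT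
  have hTρ : T * ρ = A * η := by rw [hρ]; field_simp
  have hρ0 : 0 < ρ := by rw [hρ]; positivity
  have hρA : ρ ≤ A * η := by rw [← hTρ]; exact le_mul_of_one_le_left hρ0.le hT1
  have hAη : A * η ≤ A * η0 := by gcongr
  have hεA : ε ≤ ρ ^ 2 * K / A ^ 2 := by
    have h1 : ρ ^ 2 * K / A ^ 2 = η ^ 2 * K / T ^ 2 := by rw [hρ]; field_simp
    rw [h1, le_div_iff₀ (by positivity), hε]
    have h2 : (T:ℝ) ^ 2 ≤ ((2 / η) ^ d) ^ 2 := by gcongr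
    calc η ^ (2 * (d + 1)) * (T:ℝ) ^ 2 ≤ η ^ (2 * (d + 1)) * ((2 / η) ^ d) ^ 2 := by gcongr
      _ = η ^ 2 * K := by
        rw [hK, show (4:ℝ) = 2 ^ 2 by norm_num, ← pow_mul, ← pow_mul, div_pow, mul_comm d 2, mul_add,
          pow_add]
        field_simp
  have hερ : ε / ρ ≤ ρ * K / A ^ 2 := by
    rw [div_le_iff₀ hρ0]; refine hεA.trans (le_of_eq (by ring))
  have hεT : T * (ε / ρ) ≤ η * K / A := by
    calc T * (ε / ρ) ≤ T * (ρ * K / A ^ 2) := by gcongr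
      _ = (T * ρ) * K / A ^ 2 := by ring
      _ = _ := by rw [hTρ]; field_simp
  have hε0 : 0 < ε := by rw [hε]; positivity
  have hMr : 0 ≤ Ms / r := by positivity
  have hTb : T * (ε / ρ * (Ms / r)) ≤ δ / 16 := by
    calc T * (ε / ρ * (Ms / r)) = T * (ε / ρ) * (Ms / r) := by ring
      _ ≤ η * K / A * (Ms / r) := by gcongr
      _ ≤ η * K * (Ms / r) := by gcongr; exact div_le_self (by positivity) hA
      _ = K * Ms / r * η := by ring
      _ ≤ K * Ms / r * η0 := by gcongr
      _ ≤ _ := e6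
  have hb : ε / ρ * (Ms / r) ≤ T * (ε / ρ * (Ms / r)) := by
    exact le_mul_of_one_le_left (by positivity) hT1
  have hμ : T * (4 * (C1 * ρ) / δ) = 4 * C1 * (A * η) / δ := by rw [← hTρ]; ring
  refine ⟨by linarith, by linarith, hb.trans hTb, by linarith, ?_, ⌊a / η⌋₊, ?_, ?_, ?_⟩
  · refine hεA.trans (div_le_self (by positivity) (one_le_pow₀ hA))
  · rw [Nat.one_le_floor_iff, one_le_div hη]; linarith
  · have hm : (⌊a / η⌋₊ : ℝ) ≤ a / η := Nat.floor_le (by positivity)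
    rw [hμ]
    calc 200 * (⌊a / η⌋₊ : ℝ) * (4 * C1 * (A * η) / δ) ≤ 200 * (a / η) * (4 * C1 * (A * η) / δ) := by gcongr
      _ = δ / 4 := by rw [ha]; field_simp; norm_num
  · have hm : a / η < ⌊a / η⌋₊ + 1 := Nat.lt_floor_add_one _
    set m := ⌊a / η⌋₊
    have p1 : (2 / 3 : ℝ) ≤ Real.exp (-(1 / 3)) := by
      have := Real.add_one_le_exp (-(1 / 3 : ℝ)); linarith
    have p2 : Real.exp (1 / 3) ≤ 2 := by
      have h : Real.exp (1 / 3) * Real.exp (-(1 / 3)) = 1 := by rw [← Real.exp_add]; simp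
      have := Real.exp_pos (1 / 3 : ℝ)
      nlinarith
    have p3 : (2 / 3 : ℝ) ^ m ≤ 2 * Real.exp (-(a / η / 3)) := by
      calc (2 / 3 : ℝ) ^ m ≤ Real.exp (-(1 / 3)) ^ m := by gcongr
        _ = Real.exp (-(m / 3)) := by rw [← Real.exp_nat_mul]; congr 1; ring
        _ ≤ Real.exp (1 / 3 + -(a / η / 3)) := by gcongr; linarith
        _ = Real.exp (1 / 3) * Real.exp (-(a / η / 3)) := Real.exp_add _ _
        _ ≤ _ := by gcongr
    have p4 : Real.exp (-(a / η / 6)) ≤ 6 * η / a := by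
      rw [Real.exp_neg, show 6 * η / a = (a / η / 6)⁻¹ by field_simp]
      have h0 : 0 < a / η / 6 := by positivity
      have := Real.add_one_le_exp (a / η / 6)
      exact inv_anti₀ h0 (by linarith)
    have p5 : (N:ℝ) * (4 * (d + 1) * (2 / 3) ^ m) ≤ A * η * (ν / 16) := by
      calc (N:ℝ) * (4 * (d + 1) * (2 / 3) ^ m)
          ≤ (A * ν * a / (768 * (d + 1)) * Real.exp (a / 6 * η⁻¹)) *
            (4 * (d + 1) * (2 * Real.exp (-(a / η / 3)))) := by gcongr
        _ = A * ν * a / 96 * (Real.exp (a / 6 * η⁻¹) * Real.exp (-(a / η / 3))) := by field_simp; ring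
        _ = A * ν * a / 96 * Real.exp (-(a / η / 6)) := by
          rw [← Real.exp_add]; congr 2; field_simp; ring
        _ ≤ A * ν * a / 96 * (6 * η / a) := by gcongr
        _ = _ := by field_simp; ring
    have p6 : 2 * (1300 * (d + 1) * (T * (4 * (C1 * ρ) / δ)) ^ 2 / δ) ≤ A * η * (ν / 16) := by
      rw [hμ]
      calc 2 * (1300 * (d + 1) * (4 * C1 * (A * η) / δ) ^ 2 / δ) = A * η * (Q * η) := by
            rw [hQ]; field_simp; ring
        _ ≤ A * η * (Q * η0) := by gcongr
        _ ≤ _ := by gcongr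
    have p7 : T * (ε * Ms / ρ) ≤ A * η * (ν / 32) := by
      calc T * (ε * Ms / ρ) = T * (ε / ρ) * Ms := by ring
        _ ≤ η * K / A * Ms := by gcongr
        _ = η * (K * Ms / A) := by ring
        _ ≤ η * (ν / 32) := by gcongr
        _ ≤ A * η * (ν / 32) := by gcongr; exact le_mul_of_one_le_left hη.le hA
    have p8 : T * (ρ * ν / 4 - ε * Ms / ρ) = A * η * (ν / 4) - T * (ε * Ms / ρ) := by rw [← hTρ]; ring
    rw [p8]
    have : 0 < A * η * ν := by positivity
    linarith

end Nek

/-- **Nekhoroshev theorem for a quasi-integrable exact symplectic map.**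
Setting: `B_R` a closed ball in `ℝ^d`, `𝒟_F` the complex domain
`{(I,φ) : dist(I,B_R) ≤ σ, |Im φ| ≤ r}`; `h₀` real-analytic on the `σ`-neighbourhood
`U_σ` of `B_R`, with gradient `ω` and strongly convex with parameter `ν > 0`
(`h₀''(I)(v,v) ≥ ν |v|₂²`); for `0 ≤ ε ≤ ε̄`, `s_ε` is analytic on `𝒟_F`, real at real
points, `1`-periodic in the angles and uniformly bounded by `M_s`; `F_ε` is the lift of
the exact symplectic map defined implicitly by the generating function
`Ī·φ + h₀(Ī) + ε s_ε(Ī,φ)`, i.e. `Ī = I − ε ∂_φ s_ε(Ī,φ)`,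
`φ̄ = φ + ω(Ī) + ε ∂_I s_ε(Ī,φ)`.
Conclusion: there are positive constants `ε₀, c₁, c₂, c₃` such that for `0 < ε ≤ ε₀`,
every trajectory starting in `B_R × ℝ^d` satisfies `|I_k − I₀| < c₁ ε^{1/(2(d+1))}`
for all `0 ≤ k ≤ c₂ exp(c₃ ε^{−1/(2(d+1))})`. -/
theorem nekhoroshev_quasi_integrable_map (d : ℕ) (hd : 1 ≤ d)
    (R σ r ν εbar Ms : ℝ)
    (hR : 0 < R) (hσ : 0 < σ) (hr : 0 < r) (hν : 0 < ν) (hεbar : 0 < εbar)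
    (c₀ : Fin d → ℝ) (BR : Set (Fin d → ℝ)) (hBR : BR = Metric.closedBall c₀ R)
    (Uσ : Set (Fin d → ℝ)) (hUσ : Uσ = {I | ∃ y ∈ BR, dist I y ≤ σ})
    (DF : Set (CPhase d))
    (hDF : DF = {z : CPhase d |
      (∃ y ∈ BR, dist z.1 (cx d y) ≤ σ) ∧ ∀ i, |(z.2 i).im| ≤ r})
    (h₀ : (Fin d → ℝ) → ℝ) (hh₀ : AnalyticOnNhd ℝ h₀ Uσ)
    (ω : (Fin d → ℝ) → Fin d → ℝ)
    (hω : ∀ I ∈ Uσ, HasFDerivAt h₀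
      (∑ i, ω I i • (ContinuousLinearMap.proj i : (Fin d → ℝ) →L[ℝ] ℝ)) I)
    (hconvex : ∀ I ∈ Uσ, ∀ v : Fin d → ℝ,
      ν * ∑ i, v i ^ 2 ≤ ∑ i, fderiv ℝ ω I v i * v i)
    (s : ℝ → CPhase d → ℂ)
    (hsa : ∀ ε ∈ Set.Icc (0 : ℝ) εbar, AnalyticOnNhd ℂ (s ε) DF)
    (hsreal : ∀ ε ∈ Set.Icc (0 : ℝ) εbar, ∀ x : RPhase d,
      (cx d x.1, cx d x.2) ∈ DF → (s ε (cx d x.1, cx d x.2)).im = 0)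
    (hsper : ∀ ε ∈ Set.Icc (0 : ℝ) εbar, ∀ z ∈ DF, ∀ e : Fin d → ℤ,
      s ε (z.1, z.2 + fun i => ((e i : ℝ) : ℂ)) = s ε z)
    (hsbound : ∀ ε ∈ Set.Icc (0 : ℝ) εbar, ∀ z ∈ DF, ‖s ε z‖ ≤ Ms)
    (F : ℝ → RPhase d → RPhase d)
    (hF : ∀ ε ∈ Set.Icc (0 : ℝ) εbar, ∀ x : RPhase d,
      (∃ y ∈ BR, dist x.1 y ≤ σ / 2) →
      (∃ y ∈ BR, dist (F ε x).1 y ≤ σ) ∧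
      (∀ i, (F ε x).1 i = x.1 i -
        ε * (fderiv ℂ (s ε) (cx d (F ε x).1, cx d x.2) (0, Pi.single i 1)).re) ∧
      (∀ i, (F ε x).2 i = x.2 i + ω (F ε x).1 i +
        ε * (fderiv ℂ (s ε) (cx d (F ε x).1, cx d x.2) (Pi.single i 1, 0)).re))
    (hlift : ∀ ε ∈ Set.Icc (0 : ℝ) εbar, ∀ x : RPhase d, ∀ e : Fin d → ℤ,
      F ε (x.1, x.2 + fun i => (e i : ℝ)) = ((F ε x).1, (F ε x).2 + fun i => (e i : ℝ))) :
    ∃ ε₀ c₁ c₂ c₃ : ℝ, 0 < ε₀ ∧ ε₀ ≤ εbar ∧ 0 < c₁ ∧ 0 < c₂ ∧ 0 < c₃ ∧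
      ∀ ε : ℝ, 0 < ε → ε ≤ ε₀ → ∀ x₀ : RPhase d, x₀.1 ∈ BR →
        ∀ k : ℕ, (k : ℝ) ≤ c₂ * Real.exp (c₃ * ε ^ (-(1 / (2 * ((d : ℝ) + 1))))) →
          ‖((F ε)^[k] x₀).1 - x₀.1‖ < c₁ * ε ^ (1 / (2 * ((d : ℝ) + 1))) := by
  have hc₀ : c₀ ∈ BR := by rw [hBR]; exact Metric.mem_closedBall_self hR.le
  have hDF' : ∀ z : CPhase d, (∃ y ∈ BR, dist z.1 (cx d y) ≤ σ) → (∀ i, |(z.2 i).im| ≤ r) → z ∈ DF := by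
    intro z h1 h2; rw [hDF]; exact ⟨h1, h2⟩
  have hU' : ∀ I, (∃ y ∈ BR, dist I y ≤ σ) → I ∈ Uσ := by
    intro I h; rw [hUσ]; exact h
  have hMs : 0 ≤ Ms := by
    refine (norm_nonneg _).trans (hsbound 0 ⟨le_rfl, hεbar.le⟩ (cx d c₀, cx d c₀) (hDF' _ ⟨c₀, hc₀, ?_⟩ ?_))
    · simp only; rw [dist_self]; exact hσ.le
    · intro i; simp [cx, hr.le]
  obtain ⟨δ0, hδ0, M0, hext⟩ := Nek.ext_unif (K := BR) (h := h₀) (by rw [hBR]; exact isCompact_closedBall c₀ R)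
    (fun x hx => hh₀ x (hU' x ⟨x, hx, by rw [dist_self]; exact hσ.le⟩))
  have hM0 : 0 ≤ M0 := by
    obtain ⟨H, _, h2, _⟩ := hext c₀ hc₀
    exact (norm_nonneg _).trans (h2 _ (Metric.mem_ball_self hδ0))
  have hd0 : (1:ℝ) ≤ d := by exact_mod_cast hd
  have hδ : 0 < min 1 r := lt_min one_pos hr
  have hC1 : 0 < 72 * M0 / δ0 ^ 2 + 3 * d + (4:ℝ) ^ d * Ms := by positivity
  obtain ⟨A, η0, c2, c3, hA, hη0, hη01, hc2, hc3, hdA, hpar⟩ := Nek.params (d := d) hν hσ hr hδ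
    (min_le_left 1 r) hδ0 hMs hC1
  refine ⟨min εbar (η0 ^ (2 * (d + 1))), 3 * A, c2, c3, lt_min hεbar (by positivity), min_le_left _ _,
    by linarith, hc2, hc3, ?_⟩
  intro ε hε hεle x₀ hx₀ k hk
  have hεm : ε ∈ Set.Icc (0:ℝ) εbar := ⟨hε.le, hεle.trans (min_le_left _ _)⟩
  set η : ℝ := ε ^ (1 / (2 * ((d : ℝ) + 1))) with hη
  have hη1 : 0 < η := Real.rpow_pos_of_pos hε _
  have hexp : (1 / (2 * ((d : ℝ) + 1))) * ((2 * (d + 1) : ℕ) : ℝ) = 1 := by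
    push_cast; field_simp
  have hηε : ε = η ^ (2 * (d + 1)) := by
    rw [hη, ← Real.rpow_natCast, ← Real.rpow_mul hε.le, hexp, Real.rpow_one]
  have hηle : η ≤ η0 := by
    have h1 : η ^ (2 * (d + 1)) ≤ η0 ^ (2 * (d + 1)) := by
      rw [← hηε]; exact hεle.trans (min_le_right _ _)
    exact le_of_pow_le_pow_left₀ (by omega) hη0.le h1
  have hinv : ε ^ (-(1 / (2 * ((d : ℝ) + 1)))) = η⁻¹ := Real.rpow_neg hε.le _
  rw [hinv] at hk
  have hN1 : 1 ≤ ⌈η⁻¹⌉₊ := Nat.one_le_ceil_iff.2 (by positivity)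
  obtain ⟨T, hT, hTN, p, hp⟩ := Nek.dirichlet (ω x₀.1) ⌈η⁻¹⌉₊ hN1
  have hTr : (0:ℝ) < T := by exact_mod_cast hT
  have hinv1 : 1 ≤ η⁻¹ := (one_le_inv₀ hη1).2 (hηle.trans hη01)
  have hceil : (⌈η⁻¹⌉₊ : ℝ) ≤ 2 / η := by
    have := Nat.ceil_lt_add_one (show 0 ≤ η⁻¹ by positivity)
    rw [div_eq_mul_inv]; linarith
  have hTd : (T:ℝ) ≤ (2 / η) ^ d := by
    calc (T:ℝ) ≤ (⌈η⁻¹⌉₊ : ℝ) ^ d := by exact_mod_cast hTN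
      _ ≤ _ := by gcongr
  have hkN : ((k / T : ℕ) : ℝ) ≤ c2 * Real.exp (c3 * η⁻¹) :=
    le_trans (by exact_mod_cast Nat.div_le_self k T) hk
  obtain ⟨q1, q2, q3, q4, q5, m, q6, q7, q8⟩ := hpar η hη1 hηle T hT hTd (A * η / T) ε rfl hηε (k / T) hkN
  have hA0 : 0 < A := by linarith
  have hρ : 0 < A * η / T := by positivity
  obtain ⟨H, H1, H2, H3⟩ := hext x₀.1 hx₀
  have hp' : ∀ i, |(T:ℝ) * ω x₀.1 i - p i| ≤ T * (A * η / T) / A := by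
    intro i
    refine (hp i).trans ?_
    have e : (T:ℝ) * (A * η / T) / A = η := by field_simp
    rw [e, div_le_iff₀ (by positivity)]
    have := Nat.le_ceil η⁻¹
    calc (1:ℝ) = η * η⁻¹ := by field_simp
      _ ≤ _ := by gcongr
  have hmain := Nek.orbit_bound (BR := BR) (DF := DF) (ν := ν) (σ := σ) (r := r) (Ms := Ms) (M0 := M0)
    (ε := ε) (δ0 := δ0) (ρ := A * η / T) (A := A) (K := 4 ^ d) (δ := min 1 r) (F := F ε) (s := s ε)
    (N := k / T) (m := m)
    hd hν hr hε.le hDF' (fun I hI => hω I (hU' I hI)) (fun I hI => hconvex I (hU' I hI)) (hsa ε hεm)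
    (hsreal ε hεm) (hsbound ε hεm) (hF ε hεm) (hlift ε hεm) hx₀ H1 H2 H3 hρ q1 q2 le_rfl q3 hT q4 hA hp'
    hdA hδ (min_le_left _ _) (min_le_right _ _) (by positivity) q5 rfl rfl q6 q7 q8
    (k / T) le_rfl (k % T) (Nat.mod_lt k hT).le
  rw [mul_comm, Nat.div_add_mod] at hmain
  refine lt_of_le_of_lt hmain ?_
  have h1 : A * η / T ≤ A * η := div_le_self (by positivity) (by exact_mod_cast hT)
  have : 0 < A * η := by positivity
  linarith
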